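/- L² energy estimate: let n be a nonnegative bounded solution of the Kompaneets equation with nonnegative initial data n₀ satisfying x² n₀(x) → 0 as x → ∞. Then for any t > s > 0: ∫₀^∞ n(x,t)² dx + ∫ₛᵗ ∫₀^∞ ( n(x,τ)² + x² (∂ₓ n(x,τ))² ) dx dτ ≤ ∫₀^∞ n(x,s)² dx + 2 ∫ₛᵗ ∫₀^∞ x n(x,τ)² dx dτ. -/

import Mathlib

/-!
Multiplied by `2 n`, the equation becomes
`∂ₜ(n²) = x² ∂ₓ²(n²) + x² ∂ₓ(n²) + ∂ₓ((4/3) n³) + (4 x - 4) n² - 2 x² (∂ₓn)²`,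
and a formal integration by parts in `x` turns the quadratic terms into `∫ (2 x - 2) n²`. The
derivatives are only known to exist pointwise, however, so one can neither differentiate under the
integral sign nor apply Fubini to `∂ₜn`.

Instead, `n²` is replaced by its sup-convolution `u` in time, with parameter `η`. At each point
`u` is touched from below by a translate in time of `n²`, so that the pointwise equation makes `u`
semiconvex in `x` and, up to `O(η)`, a subsolution of the equation for `n²` in terms of difference
quotients. One of the two copies of `x² (∂ₓn)²` absorbs the error, which is why the inequality
keeps only one. Semiconvexity bounds the difference quotients on one side, so the reverse Fatou
lemma yields the inequality integrated against a cutoff, where all derivatives fall on the cutoff.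
The surviving dissipation is bounded below by difference quotients with a fixed step, using
Jensen's inequality, and this lower bound survives the limit `η → 0`.

Cutoffs obtained by dilation have scale-invariant derivative bounds. Near `x = 0` the cutoff `φ`
is increasing and the boundary term `-φ' n³` has the favourable sign; elsewhere `x² n → 0`
provides the domination needed to remove `φ`. Fatou's lemma recovers `x² (∂ₓn)²` as the step tends
to `0`.
-/

open MeasureTheory Filter Set Real Topology

/-- The Kompaneets photon flux `J(x,u) = x² u'(x) + (x² - 2x) u(x) + u(x)²`. -/
noncomputable def kompFlux (u : ℝ → ℝ) (x : ℝ) : ℝ :=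
  x ^ 2 * deriv u x + (x ^ 2 - 2 * x) * u x + u x ^ 2

/-- A (global-in-time) nonnegative solution of the Kompaneets equation
`∂ₜ n = ∂ₓ J(x, n(·,t))` on `(0,∞) × (0,∞)` with initial data `n₀`:
nonnegative, bounded, `C^{2,1}` in the interior, attaining the initial data,
continuous into `L¹`, and with `x² n → 0` and `x² ∂ₓ n → 0` as `x → ∞`,
uniformly on the indicated time sets.  No boundary condition at `x = 0`. -/
structure IsKompSol (n : ℝ → ℝ → ℝ) (n₀ : ℝ → ℝ) : Prop where
  nonneg : ∀ x t : ℝ, 0 < x → 0 < t → 0 ≤ n x t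
  bounded : ∃ M : ℝ, ∀ x t : ℝ, 0 < x → 0 < t → n x t ≤ M
  init : ∀ x : ℝ, 0 < x → n x 0 = n₀ x
  contOn : ContinuousOn (fun p : ℝ × ℝ => n p.1 p.2)
    ((Set.Ioi (0:ℝ)) ×ˢ (Set.Ioi (0:ℝ)))
  diff_x : ∀ t : ℝ, 0 < t → ∀ x : ℝ, 0 < x → DifferentiableAt ℝ (fun y => n y t) x
  diff_xx : ∀ t : ℝ, 0 < t → ∀ x : ℝ, 0 < x →
    DifferentiableAt ℝ (deriv (fun y => n y t)) x
  diff_t : ∀ x : ℝ, 0 < x → ∀ t : ℝ, 0 < t → DifferentiableAt ℝ (fun τ => n x τ) t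
  pde : ∀ x : ℝ, 0 < x → ∀ t : ℝ, 0 < t →
    deriv (fun τ => n x τ) t = deriv (fun y => kompFlux (fun z => n z t) y) x
  l1init : Filter.Tendsto (fun t => ∫ x in Set.Ioi (0:ℝ), |n x t - n₀ x|)
    (𝓝[>] (0:ℝ)) (nhds 0)
  decay : ∀ T : ℝ, 0 < T → ∀ ε : ℝ, 0 < ε → ∃ R : ℝ, 0 < R ∧
    ∀ x : ℝ, R ≤ x → ∀ t : ℝ, 0 ≤ t → t < T → x ^ 2 * n x t < ε
  decay' : ∀ T : ℝ, 0 < T → ∀ ε : ℝ, 0 < ε → ∃ R : ℝ, 0 < R ∧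
    ∀ x : ℝ, R ≤ x → ∀ t : ℝ, 1 / x ^ 2 ≤ t → t < T →
      |x ^ 2 * deriv (fun y => n y t) x| < ε

/-! ### Second differences and semiconvexity -/

/-- The symmetric second difference quotient of `f` at `x` with step `h`. -/
noncomputable def secondDiff (f : ℝ → ℝ) (x h : ℝ) : ℝ :=
  (f (x + h) + f (x - h) - 2 * f x) / h ^ 2

lemma tendsto_secondDiff {f : ℝ → ℝ} {x q : ℝ}
    (hf : ∀ᶠ y in 𝓝 x, DifferentiableAt ℝ f y) (hq : HasDerivAt (deriv f) q x) :
    Tendsto (secondDiff f x) (𝓝[>] 0) (𝓝 q) := by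
  have hright : Tendsto (fun h : ℝ => x + h) (𝓝 0) (𝓝 x) :=
    (by fun_prop : Continuous fun h : ℝ => x + h).tendsto' 0 x (add_zero x)
  have hleft : Tendsto (fun h : ℝ => x - h) (𝓝 0) (𝓝 x) :=
    (by fun_prop : Continuous fun h : ℝ => x - h).tendsto' 0 x (sub_zero x)
  refine HasDerivAt.lhopital_zero_nhdsGT (f' := fun h => deriv f (x + h) - deriv f (x - h))
    (g' := fun h => 2 * h) ?_ ?_ ?_ ?_ ?_ ?_
  · filter_upwards [nhdsWithin_le_nhds (hright.eventually hf),
      nhdsWithin_le_nhds (hleft.eventually hf)] with h hr hl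
    simpa [sub_eq_add_neg] using
      ((hr.hasDerivAt.comp_const_add x h).add (hl.hasDerivAt.comp_const_sub x h)).sub_const
        (2 * f x)
  · exact Eventually.of_forall fun h => by simpa using hasDerivAt_pow 2 h
  · filter_upwards [self_mem_nhdsWithin] with h (hh : 0 < h)
    positivity
  · have hfx := hf.self_of_nhds.continuousAt.tendsto
    have := ((hfx.comp hright).add (hfx.comp hleft)).sub_const (2 * f x)
    exact (this.congr fun _ => rfl).mono_left nhdsWithin_le_nhds |>.trans_eq (by ring_nf)
  · exact ((continuous_pow 2).tendsto' 0 0 (by simp)).mono_left nhdsWithin_le_nhds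
  · have hderiv : HasDerivAt (fun h => deriv f (x + h) - deriv f (x - h)) (q + q) 0 := by
      simpa using (HasDerivAt.comp_const_add x 0 (by simpa using hq)).fun_sub
        (HasDerivAt.comp_const_sub x 0 (by simpa using hq))
    have hslope := (hasDerivAt_iff_tendsto_slope_zero.1 hderiv).mono_left
      (nhdsGT_le_nhdsNE 0)
    refine (add_self_div_two q ▸ hslope.div_const 2).congr' ?_
    filter_upwards [self_mem_nhdsWithin] with h (hh : 0 < h)
    simp only [zero_add, add_zero, sub_zero, sub_self, smul_eq_mul]
    field_simp

lemma nonpos_of_secondDiff_pos {f : ℝ → ℝ} {a b : ℝ} (hc : ContinuousOn f (Icc a b))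
    (ha : f a ≤ 0) (hb : f b ≤ 0)
    (hf : ∀ z ∈ Ioo a b, ∀ᶠ h in 𝓝[>] (0 : ℝ), 0 < secondDiff f z h) :
    ∀ x ∈ Icc a b, f x ≤ 0 := by
  intro x hx
  obtain ⟨z, hz, hmax⟩ := isCompact_Icc.exists_isMaxOn ⟨x, hx⟩ hc
  refine (hmax hx).trans (not_lt.1 fun hpos => ?_)
  have haz : a < z := hz.1.lt_of_ne (by rintro rfl; exact hpos.not_ge ha)
  have hzb : z < b := hz.2.lt_of_ne (by rintro rfl; exact hpos.not_ge hb)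
  obtain ⟨h, hd, hzh, hhz, hh⟩ := ((hf z ⟨haz, hzb⟩).and
    ((eventually_nhdsWithin_of_eventually_nhds (eventually_lt_nhds (sub_pos.2 haz))).and
    ((eventually_nhdsWithin_of_eventually_nhds (eventually_lt_nhds (sub_pos.2 hzb))).and
    self_mem_nhdsWithin))).exists
  have hr : f (z + h) ≤ f z := hmax ⟨by linarith, by linarith⟩
  have hl : f (z - h) ≤ f z := hmax ⟨by linarith, by linarith⟩
  exact hd.not_ge (div_nonpos_of_nonpos_of_nonneg (by linarith) (sq_nonneg h))

lemma convexOn_of_secondDiff_pos {f : ℝ → ℝ} {a b : ℝ} (hc : ContinuousOn f (Ioo a b))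
    (hf : ∀ z ∈ Ioo a b, ∀ᶠ h in 𝓝[>] (0 : ℝ), 0 < secondDiff f z h) :
    ConvexOn ℝ (Ioo a b) f := by
  refine LinearOrder.convexOn_of_lt (convex_Ioo a b) fun x hx y hy hxy p q hp hq hpq => ?_
  have hsub : Icc x y ⊆ Ioo a b := (convex_Ioo a b).ordConnected.out hx hy
  have hxy0 : y - x ≠ 0 := (sub_pos.2 hxy).ne'
  let m := (f y - f x) / (y - x)
  have hm : m * (y - x) = f y - f x := div_mul_cancel₀ _ hxy0
  have hchord : ∀ z ∈ Icc x y, f z - (f x + m * (z - x)) ≤ 0 := by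
    refine nonpos_of_secondDiff_pos ((hc.mono hsub).sub (by fun_prop)) (by simp) (by linarith)
      fun z hz => ?_
    filter_upwards [hf z (hsub (Ioo_subset_Icc_self hz))] with h hh
    convert hh using 1
    unfold secondDiff
    ring
  have hz := hchord (p • x + q • y) (convex_Icc x y (left_mem_Icc.2 hxy.le)
    (right_mem_Icc.2 hxy.le) hp.le hq.le hpq)
  obtain rfl : p = 1 - q := by linarith
  simp only [smul_eq_mul] at hz ⊢
  linear_combination hz + q * hm

lemma convexOn_add_sq_of_lt_secondDiff {f : ℝ → ℝ} {a b C : ℝ} (hc : ContinuousOn f (Ioo a b))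
    (hf : ∀ z ∈ Ioo a b, ∀ᶠ h in 𝓝[>] (0 : ℝ), -C < secondDiff f z h) :
    ConvexOn ℝ (Ioo a b) fun x => f x + C / 2 * x ^ 2 := by
  refine convexOn_of_secondDiff_pos (hc.add (by fun_prop)) fun z hz => ?_
  filter_upwards [hf z hz, self_mem_nhdsWithin] with h hh (h0 : 0 < h)
  have : secondDiff (fun x => f x + C / 2 * x ^ 2) z h = secondDiff f z h + C := by
    unfold secondDiff
    field_simp
    ring
  linarith

lemma neg_le_secondDiff_of_convexOn {f : ℝ → ℝ} {s : Set ℝ} {C x h : ℝ}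
    (hf : ConvexOn ℝ s fun x => f x + C / 2 * x ^ 2) (hh : h ≠ 0) (hl : x - h ∈ s)
    (hr : x + h ∈ s) : -C ≤ secondDiff f x h := by
  have hmid := hf.2 hl hr (by norm_num : (0 : ℝ) ≤ 1 / 2) (by norm_num : (0 : ℝ) ≤ 1 / 2)
    (by norm_num)
  simp only [smul_eq_mul, show 1 / 2 * (x - h) + 1 / 2 * (x + h) = x by ring] at hmid
  rw [secondDiff, le_div_iff₀ (by positivity)]
  linarith

lemma exists_lipschitzOnWith_Icc_of_convexOn {f : ℝ → ℝ} {a b a' b' C : ℝ} (hfc : Continuous f)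
    (hf : ConvexOn ℝ (Ioo a b) fun x => f x + C / 2 * x ^ 2) (ha : a < a') (hb : b' < b) :
    ∃ L, LipschitzOnWith L f (Icc a' b') := by
  let c := (a + b) / 2
  let r := (b - a) / 2
  let δ := min (a' - a) (b - b')
  have hδ : 0 < δ := lt_min (sub_pos.2 ha) (sub_pos.2 hb)
  have hball : Ioo a b = Metric.ball c r := by
    rw [Real.ball_eq_Ioo]; congr 1 <;> simp only [c, r] <;> ring
  have hsub : Icc a' b' ⊆ Metric.ball c (r - δ / 2) := by
    rw [Real.ball_eq_Ioo]
    intro x hx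
    have h1 : δ ≤ a' - a := min_le_left _ _
    have h2 : δ ≤ b - b' := min_le_right _ _
    constructor <;> simp only [c, r] <;> linarith [hx.1, hx.2]
  have hbdd : Bornology.IsBounded ((fun x => f x + C / 2 * x ^ 2) '' Metric.ball c r) :=
    ((isCompact_closedBall c r).image (by fun_prop)).isBounded.subset
      (image_mono Metric.ball_subset_closedBall)
  obtain ⟨L₁, hL₁⟩ := ConvexOn.exists_lipschitzOnWith_of_isBounded (hball ▸ hf)
    (show r - δ / 2 < r by linarith) hbdd
  obtain ⟨L₂, hL₂⟩ := (by fun_prop : ContDiffOn ℝ 1 (fun x : ℝ => C / 2 * x ^ 2)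
    (Icc a' b')).exists_lipschitzOnWith one_ne_zero (convex_Icc a' b') isCompact_Icc
  refine ⟨L₁ + L₂, ?_⟩
  simpa using (hL₁.mono hsub).sub hL₂

/-! ### Sup-convolution in time -/

/-- Sup-convolution in the time variable: the supremum over `σ ∈ [T₀, T₁]` of
`v(x, σ) - K (t - σ)²`. It regularises `v` in `t` while keeping it a subsolution. -/
noncomputable def supConv (v : ℝ → ℝ → ℝ) (T₀ T₁ K x t : ℝ) : ℝ :=
  sSup ((fun σ => v x σ - K * (t - σ) ^ 2) '' Icc T₀ T₁)

section SupConv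

variable {v : ℝ → ℝ → ℝ} {T₀ T₁ K : ℝ}

lemma continuous_supConv (hv : Continuous fun p : ℝ × ℝ => v p.1 p.2) :
    Continuous fun p : ℝ × ℝ => supConv v T₀ T₁ K p.1 p.2 := by
  refine IsCompact.continuous_sSup (f := fun (p : ℝ × ℝ) σ => v p.1 σ - K * (p.2 - σ) ^ 2)
    isCompact_Icc ?_
  have : Continuous fun q : (ℝ × ℝ) × ℝ => v q.1.1 q.2 :=
    hv.comp (by fun_prop : Continuous fun q : (ℝ × ℝ) × ℝ => (q.1.1, q.2))
  exact this.sub (by fun_prop)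

lemma continuous_penalized (hv : Continuous fun p : ℝ × ℝ => v p.1 p.2) (x t : ℝ) :
    Continuous fun σ => v x σ - K * (t - σ) ^ 2 :=
  (hv.comp (by fun_prop : Continuous fun σ : ℝ => (x, σ))).sub (by fun_prop)

lemma le_supConv (hv : Continuous fun p : ℝ × ℝ => v p.1 p.2) (x t : ℝ) {σ : ℝ}
    (hσ : σ ∈ Icc T₀ T₁) : v x σ - K * (t - σ) ^ 2 ≤ supConv v T₀ T₁ K x t :=
  le_csSup (isCompact_Icc.bddAbove_image (continuous_penalized hv x t).continuousOn)
    (mem_image_of_mem _ hσ)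

lemma self_le_supConv (hv : Continuous fun p : ℝ × ℝ => v p.1 p.2) (x : ℝ) {t : ℝ}
    (ht : t ∈ Icc T₀ T₁) : v x t ≤ supConv v T₀ T₁ K x t := by
  simpa using le_supConv (K := K) hv x t ht

lemma exists_eq_supConv (hv : Continuous fun p : ℝ × ℝ => v p.1 p.2) (h : T₀ ≤ T₁) (x t : ℝ) :
    ∃ σ ∈ Icc T₀ T₁, supConv v T₀ T₁ K x t = v x σ - K * (t - σ) ^ 2 :=
  isCompact_Icc.exists_sSup_image_eq (nonempty_Icc.2 h)
    (continuous_penalized hv x t).continuousOn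

/-- The maximiser `σ` for time `t` is a competitor for time `t - h`. -/
lemma supConv_backward_slope_le (hv : Continuous fun p : ℝ × ℝ => v p.1 p.2) {x t σ h : ℝ}
    (hσ : σ ∈ Icc T₀ T₁) (he : supConv v T₀ T₁ K x t = v x σ - K * (t - σ) ^ 2) (hh : 0 < h) :
    (supConv v T₀ T₁ K x t - supConv v T₀ T₁ K x (t - h)) / h ≤ 2 * K * (σ - t) + K * h := by
  have := le_supConv (K := K) hv x (t - h) hσ
  rw [div_le_iff₀ hh]
  nlinarith

lemma exists_penalty_maximizer_close (hv : Continuous fun p : ℝ × ℝ => v p.1 p.2)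
    {a b B s t η : ℝ} (hB : ∀ x t, v x t ∈ Icc 0 B) (hs : T₀ < s) (ht : t < T₁)
    (hη : 0 < η) :
    ∃ K : ℝ, 0 < K ∧ ∀ x ∈ Icc a b, ∀ τ ∈ Icc s t, ∀ σ ∈ Icc T₀ T₁,
      supConv v T₀ T₁ K x τ = v x σ - K * (τ - σ) ^ 2 →
        σ ∈ Ioo T₀ T₁ ∧ v x σ ≤ v x τ + η := by
  obtain ⟨ρ, hρ, hu⟩ := Metric.uniformContinuousOn_iff.1
    ((isCompact_Icc.prod isCompact_Icc).uniformContinuousOn_of_continuous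
      (s := Icc a b ×ˢ Icc T₀ T₁) hv.continuousOn) η hη
  have hB0 : 0 ≤ B := (hB 0 0).1.trans (hB 0 0).2
  let r := min ρ (min (s - T₀) (T₁ - t))
  have hr : 0 < r := lt_min hρ (lt_min (sub_pos.2 hs) (sub_pos.2 ht))
  refine ⟨(B + 1) / r ^ 2, by positivity, fun x hx τ hτ σ hσ he => ?_⟩
  have hτI : τ ∈ Icc T₀ T₁ := ⟨hs.le.trans hτ.1, hτ.2.trans ht.le⟩
  have hpen : (B + 1) / r ^ 2 * (τ - σ) ^ 2 ≤ B := by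
    linarith [self_le_supConv (K := (B + 1) / r ^ 2) hv x hτI, (hB x σ).2, (hB x τ).1]
  have hclose : |τ - σ| < r := by
    refine abs_lt_of_sq_lt_sq ?_ hr.le
    rw [div_mul_eq_mul_div, div_le_iff₀ (by positivity)] at hpen
    nlinarith [sq_nonneg (τ - σ), pow_pos hr 2]
  have hs' : r ≤ s - T₀ := (min_le_right _ _).trans (min_le_left _ _)
  have ht' : r ≤ T₁ - t := (min_le_right _ _).trans (min_le_right _ _)
  obtain ⟨hl, hr'⟩ := abs_lt.1 hclose
  refine ⟨⟨by linarith [hτ.1], by linarith [hτ.2]⟩, ?_⟩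
  have hdist := hu (x, σ) ⟨hx, hσ⟩ (x, τ) ⟨hx, hτI⟩ (by
    simpa [Prod.dist_eq, Real.dist_eq, abs_sub_comm, hρ] using
      hclose.trans_le (min_le_left _ _))
  linarith [(abs_lt.1 (Real.dist_eq _ _ ▸ hdist)).2]

end SupConv

/-! ### Subjets of the regularised energy density -/

/-- The energy density `n²`, frozen outside `[a, ∞) × [T₀, ∞)` so as to be defined and continuous
on the whole plane. -/
noncomputable def clampSq (n : ℝ → ℝ → ℝ) (a T₀ x t : ℝ) : ℝ :=
  n (max a x) (max T₀ t) ^ 2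

/-- One-sided second-order information on `u` at `(x, t)`: up to errors `η` and `D`, `u` is
touched from below by the square of a function with value `ν` and space derivatives `P` and `Q`, and
this square has the time derivative `κ` prescribed by the Kompaneets equation. -/
structure IsEnergySubjet (u : ℝ → ℝ → ℝ) (M D η x t ν P Q κ : ℝ) : Prop where
  nonneg : 0 ≤ ν
  le_bound : ν ≤ M
  sq_le : ν ^ 2 ≤ u x t
  le_sq_add : u x t ≤ ν ^ 2 + η
  equation : 2 * ν * (x ^ 2 * Q + x ^ 2 * P + 2 * ν * P + (2 * x - 2) * ν) = κ
  abs_rate_le : |κ| ≤ D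
  backward_slope_le : ∀ h > 0, (u x t - u x (t - h)) / h ≤ κ + D * h
  le_secondDiff : ∀ ε > 0, ∀ᶠ h in 𝓝[>] 0,
    2 * P ^ 2 + 2 * ν * Q - ε ≤ secondDiff (fun y => u y t) x h
  eq_of_hasDerivAt : ∀ d, HasDerivAt (fun y => u y t) d x → d = 2 * ν * P

section Clamp

variable {n : ℝ → ℝ → ℝ} {n₀ : ℝ → ℝ} {a T₀ : ℝ}

lemma clampSq_eq {x t : ℝ} (hx : a ≤ x) (ht : T₀ ≤ t) : clampSq n a T₀ x t = n x t ^ 2 := by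
  rw [clampSq, max_eq_right hx, max_eq_right ht]

lemma IsKompSol.continuous_clampSq (hsol : IsKompSol n n₀) (ha : 0 < a) (hT : 0 < T₀) :
    Continuous fun p : ℝ × ℝ => clampSq n a T₀ p.1 p.2 :=
  (hsol.contOn.comp_continuous (f := fun p : ℝ × ℝ => (max a p.1, max T₀ p.2)) (by fun_prop)
    fun _ => ⟨lt_max_of_lt_left ha, lt_max_of_lt_left hT⟩).pow 2

lemma IsKompSol.clampSq_mem_Icc (hsol : IsKompSol n n₀) {M : ℝ}
    (hM : ∀ x t : ℝ, 0 < x → 0 < t → n x t ≤ M) (ha : 0 < a) (hT : 0 < T₀) (x t : ℝ) :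
    clampSq n a T₀ x t ∈ Icc 0 (M ^ 2) := by
  have hx : 0 < max a x := lt_max_of_lt_left ha
  have ht : 0 < max T₀ t := lt_max_of_lt_left hT
  exact ⟨sq_nonneg _, pow_le_pow_left₀ (hsol.nonneg _ _ hx ht) (hM _ _ hx ht) 2⟩

end Clamp

section Pointwise

variable {n : ℝ → ℝ → ℝ} {n₀ : ℝ → ℝ} (hsol : IsKompSol n n₀)

include hsol

lemma IsKompSol.deriv_time_eq {x t : ℝ} (hx : 0 < x) (ht : 0 < t) :
    deriv (fun τ => n x τ) t =
      x ^ 2 * deriv (deriv fun y => n y t) x + x ^ 2 * deriv (fun y => n y t) x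
        + 2 * n x t * deriv (fun y => n y t) x + (2 * x - 2) * n x t := by
  have hn := (hsol.diff_x t ht x hx).hasDerivAt
  have hn' := (hsol.diff_xx t ht x hx).hasDerivAt
  have hsq : HasDerivAt (fun y : ℝ => y ^ 2) (2 * x) x := by simpa using hasDerivAt_pow 2 x
  have hcoeff : HasDerivAt (fun y : ℝ => y ^ 2 - 2 * y) (2 * x - 2) x := by
    simpa using hsq.fun_sub ((hasDerivAt_id' x).const_mul 2)
  have hflux : HasDerivAt (fun y => kompFlux (fun z => n z t) y) _ x :=
    ((hsq.fun_mul hn').fun_add (hcoeff.fun_mul hn)).fun_add (hn.fun_pow 2)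
  rw [hsol.pde x hx t ht, hflux.deriv]
  push_cast
  ring

lemma IsKompSol.hasDerivAt_sq {x t : ℝ} (hx : 0 < x) (ht : 0 < t) :
    HasDerivAt (fun y => n y t ^ 2) (2 * n x t * deriv (fun y => n y t) x) x := by
  simpa using (hsol.diff_x t ht x hx).hasDerivAt.fun_pow 2

lemma IsKompSol.tendsto_secondDiff_sq {x t : ℝ} (hx : 0 < x) (ht : 0 < t) :
    Tendsto (secondDiff (fun y => n y t ^ 2) x) (𝓝[>] 0)
      (𝓝 (2 * deriv (fun y => n y t) x ^ 2 + 2 * n x t * deriv (deriv fun y => n y t) x)) := by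
  have hnear : ∀ᶠ y in 𝓝 x, HasDerivAt (fun y => n y t ^ 2)
      (2 * n y t * deriv (fun y => n y t) y) y := by
    filter_upwards [Ioi_mem_nhds hx] with y hy using hsol.hasDerivAt_sq hy ht
  refine tendsto_secondDiff (hnear.mono fun y hy => hy.differentiableAt) ?_
  refine HasDerivAt.congr_of_eventuallyEq ?_ (hnear.mono fun y hy => hy.deriv)
  simpa only [sq, mul_assoc] using ((hsol.diff_x t ht x hx).hasDerivAt.const_mul 2).fun_mul
    (hsol.diff_xx t ht x hx).hasDerivAt

variable {a T₀ T₁ K x t σ : ℝ} (ha : 0 < a) (hT : 0 < T₀) (hx : a < x) (hσ : σ ∈ Ioo T₀ T₁)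

include ha hT

lemma IsKompSol.sq_sub_le_supConv {y τ : ℝ} (hy : a ≤ y) (hτ : τ ∈ Icc T₀ T₁) :
    n y τ ^ 2 - K * (t - τ) ^ 2 ≤ supConv (clampSq n a T₀) T₀ T₁ K y t := by
  simpa only [clampSq_eq hy hτ.1] using le_supConv (hsol.continuous_clampSq ha hT) y t hτ

include hx hσ

variable (he : supConv (clampSq n a T₀) T₀ T₁ K x t = n x σ ^ 2 - K * (t - σ) ^ 2)

include he

lemma IsKompSol.rate_eq_of_maximizer :
    2 * n x σ * (x ^ 2 * deriv (deriv fun y => n y σ) x + x ^ 2 * deriv (fun y => n y σ) x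
      + 2 * n x σ * deriv (fun y => n y σ) x + (2 * x - 2) * n x σ) = 2 * K * (σ - t) := by
  have hx0 := ha.trans hx
  have hσ0 := hT.trans hσ.1
  have hmax : IsLocalMax (fun τ => n x τ ^ 2 - K * (t - τ) ^ 2) σ := by
    filter_upwards [Icc_mem_nhds hσ.1 hσ.2] with τ hτ
    exact he ▸ hsol.sq_sub_le_supConv ha hT hx.le hτ
  have hpen : HasDerivAt (fun τ : ℝ => K * (t - τ) ^ 2) (K * (2 * (t - σ) * (-1))) σ := by
    simpa using (((hasDerivAt_id' σ).const_sub t).fun_pow 2).const_mul K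
  have := hmax.hasDerivAt_eq_zero
    (((hsol.diff_t x hx0 σ hσ0).hasDerivAt.fun_pow 2).fun_sub hpen)
  rw [hsol.deriv_time_eq hx0 hσ0] at this
  norm_num at this
  linarith

lemma IsKompSol.le_secondDiff_supConv {ε : ℝ} (hε : 0 < ε) :
    ∀ᶠ h in 𝓝[>] 0, 2 * deriv (fun y => n y σ) x ^ 2
        + 2 * n x σ * deriv (deriv fun y => n y σ) x - ε ≤
      secondDiff (fun y => supConv (clampSq n a T₀) T₀ T₁ K y t) x h := by
  have hlim := (hsol.tendsto_secondDiff_sq (ha.trans hx) (hT.trans hσ.1)).eventually_const_le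
    (sub_lt_self _ hε)
  filter_upwards [hlim, nhdsWithin_le_nhds (Iio_mem_nhds (sub_pos.2 hx)), self_mem_nhdsWithin]
    with h hh (hha : h < x - a) (h0 : 0 < h)
  refine hh.trans ?_
  have hσI := Ioo_subset_Icc_self hσ
  have hr := hsol.sq_sub_le_supConv (K := K) (t := t) ha hT (by linarith : a ≤ x + h) hσI
  have hl := hsol.sq_sub_le_supConv (K := K) (t := t) ha hT (by linarith : a ≤ x - h) hσI
  unfold secondDiff
  gcongr ?_ / h ^ 2
  linarith

lemma IsKompSol.eq_of_hasDerivAt_supConv {d : ℝ}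
    (hd : HasDerivAt (fun y => supConv (clampSq n a T₀) T₀ T₁ K y t) d x) :
    d = 2 * n x σ * deriv (fun y => n y σ) x := by
  have hmin : IsLocalMin (fun y => supConv (clampSq n a T₀) T₀ T₁ K y t - n y σ ^ 2) x := by
    filter_upwards [Ioi_mem_nhds hx] with y hy
    linarith [hsol.sq_sub_le_supConv (K := K) (t := t) ha hT (le_of_lt hy)
      (Ioo_subset_Icc_self hσ)]
  linarith [hmin.hasDerivAt_eq_zero
    (hd.fun_sub (hsol.hasDerivAt_sq (ha.trans hx) (hT.trans hσ.1)))]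

lemma IsKompSol.isEnergySubjet_supConv {M η : ℝ} (hM : ∀ x t : ℝ, 0 < x → 0 < t → n x t ≤ M)
    (hK : 0 < K) (ht : t ∈ Icc T₀ T₁) (hclose : n x σ ^ 2 ≤ n x t ^ 2 + η) :
    IsEnergySubjet (fun x t => supConv (clampSq n a T₀) T₀ T₁ K x t + η) M
      (K * (2 * (T₁ - T₀) + 1)) η x t (n x σ) (deriv (fun y => n y σ) x)
      (deriv (deriv fun y => n y σ) x) (2 * K * (σ - t)) where
  nonneg := hsol.nonneg _ _ (ha.trans hx) (hT.trans hσ.1)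
  le_bound := hM _ _ (ha.trans hx) (hT.trans hσ.1)
  sq_le := by
    have := hsol.sq_sub_le_supConv (K := K) (t := t) ha hT hx.le ht
    rw [sub_self] at this
    linarith
  le_sq_add := by
    rw [he]
    linarith [mul_nonneg hK.le (sq_nonneg (t - σ))]
  equation := hsol.rate_eq_of_maximizer ha hT hx hσ he
  abs_rate_le := by
    rw [abs_le]
    constructor <;> nlinarith [ht.1, ht.2, hσ.1, hσ.2]
  backward_slope_le h hh := by
    have hv := hsol.continuous_clampSq ha hT
    rw [add_sub_add_right_eq_sub]
    refine (supConv_backward_slope_le hv (Ioo_subset_Icc_self hσ)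
      (by rw [he, clampSq_eq hx.le hσ.1.le]) hh).trans ?_
    have : 0 ≤ K * (T₁ - T₀) := by nlinarith [ht.1, ht.2]
    nlinarith
  le_secondDiff ε hε := by
    filter_upwards [hsol.le_secondDiff_supConv ha hT hx hσ he hε] with h hh
    convert hh using 1
    unfold secondDiff
    ring
  eq_of_hasDerivAt d hd :=
    hsol.eq_of_hasDerivAt_supConv ha hT hx hσ he (by simpa using hd.sub_const η)

end Pointwise

lemma IsKompSol.exists_regularization {n : ℝ → ℝ → ℝ} {n₀ : ℝ → ℝ} (hsol : IsKompSol n n₀)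
    {M : ℝ} (hM : ∀ x t : ℝ, 0 < x → 0 < t → n x t ≤ M) {a b s t η : ℝ} (ha : 0 < a)
    (hs : 0 < s) (hη : 0 < η) :
    ∃ (u : ℝ → ℝ → ℝ) (D : ℝ), Continuous (fun p : ℝ × ℝ => u p.1 p.2) ∧
      (∀ x, ∀ τ ∈ Icc s t, η ≤ u x τ) ∧
      ∀ x ∈ Ioo a b, ∀ τ ∈ Icc s t, n x τ ^ 2 ≤ u x τ ∧ u x τ ≤ n x τ ^ 2 + 2 * η ∧
        ∃ ν P Q κ, IsEnergySubjet u M D η x τ ν P Q κ := by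
  have hT : 0 < s / 2 := by positivity
  have hv := hsol.continuous_clampSq ha hT
  obtain ⟨K, hK, hclose⟩ := exists_penalty_maximizer_close (a := a) (b := b) (T₁ := t + 1) hv
    (hsol.clampSq_mem_Icc hM ha hT) (half_lt_self hs) (lt_add_one t) hη
  refine ⟨fun x τ => supConv (clampSq n a (s / 2)) (s / 2) (t + 1) K x τ + η,
    K * (2 * (t + 1 - s / 2) + 1),
    (continuous_supConv hv).add_const η, fun x τ hτ => ?_, fun x hx τ hτ => ?_⟩ <;>
  have hτI : τ ∈ Icc (s / 2) (t + 1) := ⟨by linarith [hτ.1], by linarith [hτ.2]⟩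
  · linarith [(hsol.clampSq_mem_Icc hM ha hT x τ).1, self_le_supConv (K := K) hv x hτI]
  · obtain ⟨σ, hσ, he⟩ := exists_eq_supConv hv (hτI.1.trans hτI.2) x τ (K := K)
    obtain ⟨hσ', hnear⟩ := hclose x (Ioo_subset_Icc_self hx) τ hτ σ hσ he
    rw [clampSq_eq hx.1.le hσ.1] at he hnear
    rw [clampSq_eq hx.1.le hτI.1] at hnear
    have hle := self_le_supConv (K := K) hv x hτI
    rw [clampSq_eq hx.1.le hτI.1] at hle
    have hpen := mul_nonneg hK.le (sq_nonneg (τ - σ))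
    refine ⟨by dsimp only; linarith, by dsimp only; linarith, _, _, _, _,
      hsol.isEnergySubjet_supConv ha hT hx.1 hσ' he hM hK hτI hnear⟩

namespace IsEnergySubjet

variable {u : ℝ → ℝ → ℝ} {M D η a x t ν P Q κ : ℝ}

lemma le_two_mul_sq_add (hj : IsEnergySubjet u M D η x t ν P Q κ) {b : ℝ} (ha : 0 < a)
    (hx : x ∈ Icc a b) :
    -((D + 4 * b * M ^ 2 + (M * (b ^ 2 + 2 * M)) ^ 2 / (2 * a ^ 2)) / a ^ 2) ≤
      2 * P ^ 2 + 2 * ν * Q := by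
  have hx0 : 0 < x := ha.trans_le hx.1
  have hb : 0 < b := hx0.trans_le hx.2
  have hν := hj.nonneg
  have hM : 0 ≤ M := hν.trans hj.le_bound
  have hD : 0 ≤ D := (abs_nonneg κ).trans hj.abs_rate_le
  let R := ν * (x ^ 2 + 2 * ν)
  have hR : R ^ 2 / (2 * x ^ 2) ≤ (M * (b ^ 2 + 2 * M)) ^ 2 / (2 * a ^ 2) := by
    have := hj.le_bound
    have := hx.1
    have := hx.2
    simp only [R]
    gcongr
  have hlow : (4 * x - 4) * ν ^ 2 ≤ 4 * b * M ^ 2 := by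
    have : ν ^ 2 ≤ M ^ 2 := pow_le_pow_left₀ hν hj.le_bound 2
    nlinarith [hx.2, sq_nonneg ν]
  have hexpand : x ^ 2 * (2 * P ^ 2 + 2 * ν * Q) =
      κ - (4 * x - 4) * ν ^ 2 + 2 * (x * P - R / (2 * x)) ^ 2 - R ^ 2 / (2 * x ^ 2) := by
    simp only [R]
    field_simp
    linear_combination 2 * x ^ 2 * hj.equation
  have hκ := neg_le_of_abs_le hj.abs_rate_le
  rw [← neg_div, div_le_iff₀ (by positivity)]
  by_cases hneg : 0 ≤ 2 * P ^ 2 + 2 * ν * Q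
  · have : 0 ≤ (M * (b ^ 2 + 2 * M)) ^ 2 / (2 * a ^ 2) := by positivity
    have : 0 ≤ (2 * P ^ 2 + 2 * ν * Q) * a ^ 2 := by positivity
    have : 0 ≤ 4 * b * M ^ 2 := by positivity
    linarith [sq_nonneg (x * P - R / (2 * x))]
  · have : a ^ 2 ≤ x ^ 2 := pow_le_pow_left₀ ha.le hx.1 2
    nlinarith [sq_nonneg (x * P - R / (2 * x))]

/-- One of the two copies of `x² P²` produced by the equation pays for the error `η`. -/
lemma rate_sub_le (hj : IsEnergySubjet u M D η x t ν P Q κ) (ha : 0 < a) (hx : a ≤ x)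
    {g p : ℝ} (hg : 0 < g) (hgu : g ^ 2 = u x t) (hp : g * p = ν * P) :
    κ - x ^ 2 * (2 * P ^ 2 + 2 * ν * Q) ≤
      2 * x ^ 2 * (g * p) + 4 * (g ^ 2 * p) + (4 * x - 4) * g ^ 2 - x ^ 2 * p ^ 2
        + (4 * M ^ 2 / a ^ 2 + 4) * η := by
  have hx0 : 0 < x := ha.trans_le hx
  have hν := hj.nonneg
  have hνg : ν ^ 2 ≤ g ^ 2 := hgu ▸ hj.sq_le
  have hgν : g ^ 2 ≤ ν ^ 2 + η := hgu ▸ hj.le_sq_add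
  have hνg' : ν ≤ g := (sq_le_sq₀ hν hg.le).1 hνg
  have hpP : p ^ 2 ≤ P ^ 2 := by
    refine le_of_mul_le_mul_left ?_ (pow_pos hg 2)
    rw [← mul_pow, hp, mul_pow]
    gcongr
  have hdissip : x ^ 2 * p ^ 2 ≤ x ^ 2 * P ^ 2 := by gcongr
  have hyoung : -(x ^ 2 * P ^ 2) - 4 * (g - ν) * (ν * P) ≤ 4 * ((g - ν) * ν / x) ^ 2 := by
    have : 0 ≤ (x * P + 2 * ((g - ν) * ν / x)) ^ 2 := sq_nonneg _
    have : x * P * ((g - ν) * ν / x) = (g - ν) * (ν * P) := by field_simp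
    linarith
  have herror : ((g - ν) * ν / x) ^ 2 ≤ M ^ 2 / a ^ 2 * η := by
    have : (g - ν) ^ 2 ≤ η := by nlinarith
    have := hj.le_bound
    rw [div_pow, mul_pow, mul_comm, mul_div_right_comm]
    gcongr
  have hdrift : (4 - 4 * x) * (g ^ 2 - ν ^ 2) ≤ 4 * η := by nlinarith
  rw [add_mul, mul_div_assoc]
  linear_combination -hj.equation - (2 * x ^ 2 + 4 * g) * hp + hdissip + hyoung + 4 * herror
    + hdrift

end IsEnergySubjet

/-! ### Integration against cutoffs -/

lemma integral_mul_pow_mul_deriv {φ g : ℝ → ℝ} {a b : ℝ} (hφ : ContDiff ℝ 1 φ)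
    (hs : tsupport φ ⊆ Ioo a b) (hg : AbsolutelyContinuousOnInterval g a b) (k : ℕ) :
    ∫ x, φ x * ((k + 1) * g x ^ k * deriv g x) = -∫ x, deriv φ x * g x ^ (k + 1) := by
  have hIoc : tsupport φ ⊆ Ioc a b := hs.trans Ioo_subset_Ioc_self
  have hvanish : ∀ x ∉ Ioo a b, φ x = 0 := fun x hx => image_eq_zero_of_notMem_tsupport
    fun h => hx (hs h)
  obtain ⟨L, hL⟩ := hφ.contDiffOn.exists_lipschitzOnWith one_ne_zero (convex_uIcc a b)
    isCompact_uIcc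
  have hgpow : AbsolutelyContinuousOnInterval (fun x => g x ^ (k + 1)) a b := by
    induction k with
    | zero => simpa using hg
    | succ k ih => simpa only [pow_succ _ (k + 1)] using ih.fun_mul hg
  have hparts := hL.absolutelyContinuousOnInterval.integral_mul_deriv_eq_deriv_mul hgpow
  rw [hvanish a (by simp), hvanish b (by simp)] at hparts
  rw [← intervalIntegral.integral_eq_integral_of_support_subset (a := a) (b := b),
    ← intervalIntegral.integral_eq_integral_of_support_subset (a := a) (b := b)]
  · rw [zero_mul, zero_mul, sub_zero, zero_sub] at hparts
    rw [← hparts]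
    refine intervalIntegral.integral_congr_ae ?_
    filter_upwards [hg.ae_differentiableAt] with x hx hmem
    rw [((hx (uIoc_subset_uIcc hmem)).hasDerivAt.fun_pow (k + 1)).deriv]
    push_cast
    rfl
  · exact (Function.support_mul_subset_left _ _).trans (support_deriv_subset.trans hIoc)
  · exact (Function.support_mul_subset_left _ _).trans ((subset_tsupport φ).trans hIoc)

lemma exists_abs_secondDiff_le {w : ℝ → ℝ} (hw : ContDiff ℝ 2 w) (hc : HasCompactSupport w) :
    ∃ C, ∀ x h, h ≠ 0 → |secondDiff w x h| ≤ C := by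
  have hd : ContDiff ℝ 1 (deriv w) := ContDiff.deriv' hw
  have hdd : Continuous (deriv (deriv w)) := hd.continuous_deriv le_rfl
  obtain ⟨C, hC⟩ := hc.deriv.deriv.exists_bound_of_continuous hdd
  have hlower : ∀ f : ℝ → ℝ, ContDiff ℝ 2 f → (∀ x, -C ≤ deriv (deriv f) x) →
      ∀ x h, h ≠ 0 → -C ≤ secondDiff f x h := by
    intro f hf hfC x h hh
    have hf' : Differentiable ℝ (deriv f) := (ContDiff.deriv' hf).differentiable one_ne_zero
    have hderiv : deriv (fun x => f x + C / 2 * x ^ 2) = fun x => deriv f x + C * x := by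
      funext y
      have := ((hf.differentiable two_ne_zero y).hasDerivAt.fun_add
        ((hasDerivAt_pow 2 y).const_mul (C / 2))).deriv
      rw [this]
      ring
    refine neg_le_secondDiff_of_convexOn (s := univ) (convexOn_univ_of_deriv2_nonneg
      ((hf.differentiable two_ne_zero).add (by fun_prop)) ?_ fun y => ?_) hh trivial trivial
    · rw [hderiv]
      exact hf'.add (by fun_prop)
    · have := ((hf' y).hasDerivAt.fun_add ((hasDerivAt_id' y).const_mul C)).deriv
      rw [Function.iterate_succ, Function.iterate_one, Function.comp_apply, hderiv, this]
      linarith [hfC y]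
  refine ⟨C, fun x h hh => abs_le.2 ⟨hlower w hw (fun y => neg_le_of_abs_le (hC y)) x h hh, ?_⟩⟩
  have := hlower (fun y => -w y) hw.neg (fun y => by
    simpa [deriv.fun_neg'] using le_of_abs_le (hC y)) x h hh
  have hneg : secondDiff (fun y => -w y) x h = -secondDiff w x h := by
    unfold secondDiff
    ring
  linarith

lemma integral_mul_secondDiff_comm {w f : ℝ → ℝ} (hw : Continuous w) (hc : HasCompactSupport w)
    (hf : Continuous f) (h : ℝ) :
    ∫ x, w x * secondDiff f x h = ∫ x, secondDiff w x h * f x := by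
  have hint : ∀ r, Integrable fun x => w x * f (x + r) := fun r =>
    (by fun_prop : Continuous fun x => w x * f (x + r)).integrable_of_hasCompactSupport hc.mul_right
  have hshift : ∀ r, Integrable (fun x => w (x - r) * f x) ∧
      ∫ x, w (x - r) * f x = ∫ x, w x * f (x + r) := fun r => by
    rw [← integral_add_right_eq_self _ r]
    refine ⟨?_, by simp only [add_sub_cancel_right]⟩
    simpa only [sub_add_cancel] using (hint r).comp_sub_right r
  have hleft : ∀ x, w x * secondDiff f x h =
      (h ^ 2)⁻¹ * (w x * f (x + h) + w x * f (x + -h) - 2 * (w x * f (x + 0))) := fun x => by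
    rw [secondDiff, add_zero, ← sub_eq_add_neg]
    ring
  have hright : ∀ x, secondDiff w x h * f x =
      (h ^ 2)⁻¹ * (w (x - h) * f x + w (x - -h) * f x - 2 * (w (x - 0) * f x)) := fun x => by
    rw [secondDiff, sub_zero, sub_neg_eq_add]
    ring
  simp only [hleft, hright, integral_const_mul]
  rw [integral_sub ((hint _).fun_add (hint _)) ((hint _).const_mul 2),
    integral_sub ((hshift _).1.fun_add (hshift _).1) ((hshift _).1.const_mul 2),
    integral_add (hint _) (hint _), integral_add (hshift _).1 (hshift _).1,
    integral_const_mul, integral_const_mul, (hshift _).2, (hshift _).2, (hshift _).2]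

lemma tendsto_integral_mul_secondDiff {w f : ℝ → ℝ} (hw : ContDiff ℝ 2 w)
    (hc : HasCompactSupport w) (hf : Continuous f) :
    Tendsto (fun h => ∫ x, w x * secondDiff f x h) (𝓝[>] 0)
      (𝓝 (∫ x, deriv (deriv w) x * f x)) := by
  have hd : ContDiff ℝ 1 (deriv w) := ContDiff.deriv' hw
  obtain ⟨C, hC⟩ := exists_abs_secondDiff_le hw hc
  obtain ⟨R, hR⟩ := hc.isCompact.isBounded.subset_closedBall 0
  have hvanish : ∀ x, R < |x| → w x = 0 := fun x hx => image_eq_zero_of_notMem_tsupport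
    fun hmem => hx.not_ge (by simpa using hR hmem)
  simp only [integral_mul_secondDiff_comm hw.continuous hc hf]
  refine tendsto_integral_filter_of_dominated_convergence
    ((Metric.closedBall 0 (R + 1)).indicator fun x => C * |f x|) ?_ ?_ ?_ ?_
  · have := hw.continuous
    exact Eventually.of_forall fun h => (by unfold secondDiff; fun_prop :
      Continuous fun x => secondDiff w x h * f x).aestronglyMeasurable
  · filter_upwards [self_mem_nhdsWithin, nhdsWithin_le_nhds (Iio_mem_nhds one_pos)]
      with h (h0 : 0 < h) (h1 : h < 1)
    refine Eventually.of_forall fun x => ?_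
    by_cases hx : x ∈ Metric.closedBall 0 (R + 1)
    · rw [indicator_of_mem hx, norm_mul]
      exact mul_le_mul_of_nonneg_right (hC x h h0.ne') (abs_nonneg _)
    · have hx' : R + 1 < |x| := by simpa using hx
      have hfar : ∀ r, |r| ≤ h → w (x + r) = 0 := fun r hr => hvanish _ (by
        have := abs_add_le (x + r) (-r)
        rw [add_neg_cancel_right, abs_neg] at this
        linarith)
      have hr := hfar h (abs_of_pos h0).le
      have hl := hfar (-h) (by rw [abs_neg, abs_of_pos h0])
      have hm := hfar 0 (by simpa using h0.le)
      rw [← sub_eq_add_neg] at hl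
      rw [add_zero] at hm
      rw [indicator_of_notMem hx, secondDiff, hr, hl, hm]
      simp
  · exact (integrable_indicator_iff Metric.isClosed_closedBall.measurableSet).2
      ((by fun_prop : Continuous fun x => C * |f x|).continuousOn.integrableOn_compact
        (isCompact_closedBall 0 _))
  · exact Eventually.of_forall fun x => (tendsto_secondDiff
      (Eventually.of_forall fun y => hw.differentiable two_ne_zero y)
      (hd.differentiable one_ne_zero x).hasDerivAt).mul_const _

/-- Fatou's lemma for the positive parts of `F h - R`, which are dominated by `|B - R|`. -/
lemma eventually_integral_le_add_of_eventually_le {α ι : Type*} [MeasurableSpace α]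
    {μ : Measure α} {l : Filter ι} [l.IsCountablyGenerated] {F : ι → α → ℝ} {R B : α → ℝ}
    (hR : Integrable R μ) (hB : Integrable B μ) (hF : ∀ᶠ h in l, Integrable (F h) μ)
    (hFB : ∀ᶠ h in l, ∀ᵐ x ∂μ, F h x ≤ B x)
    (hFR : ∀ᵐ x ∂μ, ∀ ε > 0, ∀ᶠ h in l, F h x ≤ R x + ε) {ε : ℝ} (hε : 0 < ε) :
    ∀ᶠ h in l, ∫ x, F h x ∂μ ≤ ∫ x, R x ∂μ + ε := by
  have hpos : Tendsto (fun h => ∫ x, max (F h x - R x) 0 ∂μ) l (𝓝 (∫ _, 0 ∂μ)) := by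
    refine tendsto_integral_filter_of_dominated_convergence (fun x => |B x - R x|)
      (hF.mono fun h hh => (hh.sub hR).pos_part.aestronglyMeasurable) ?_ (hB.sub hR).abs ?_
    · filter_upwards [hFB] with h hh
      filter_upwards [hh] with x hx
      rw [Real.norm_of_nonneg (le_max_right _ _)]
      exact max_le ((sub_le_sub_right hx _).trans (le_abs_self _)) (abs_nonneg _)
    · filter_upwards [hFR] with x hx
      refine Metric.tendsto_nhds.2 fun δ hδ => (hx (δ / 2) (half_pos hδ)).mono fun h hh => ?_
      rw [Real.dist_0_eq_abs, abs_of_nonneg (le_max_right _ _)]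
      exact max_lt (by linarith) hδ
  rw [integral_zero] at hpos
  filter_upwards [hF, hpos.eventually_lt_const hε] with h hh hlt
  have hmono : ∫ x, F h x - R x ∂μ ≤ ∫ x, max (F h x - R x) 0 ∂μ :=
    integral_mono (hh.sub hR) (hh.sub hR).pos_part fun x => le_max_left _ _
  rw [integral_sub hh hR] at hmono
  linarith

/-- The test functions of the energy estimate: nonnegative `C²` weights supported in `(a, b)`. -/
structure IsCutoff (φ : ℝ → ℝ) (a b : ℝ) : Prop where
  contDiff : ContDiff ℝ 2 φ
  nonneg : ∀ x, 0 ≤ φ x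
  tsupport_subset : tsupport φ ⊆ Ioo a b

namespace IsCutoff

variable {φ G : ℝ → ℝ} {a b : ℝ}

lemma eq_zero (hφ : IsCutoff φ a b) {x : ℝ} (hx : x ∉ Ioo a b) : φ x = 0 :=
  image_eq_zero_of_notMem_tsupport fun h => hx (hφ.tsupport_subset h)

lemma hasCompactSupport (hφ : IsCutoff φ a b) : HasCompactSupport φ :=
  isCompact_Icc.of_isClosed_subset (isClosed_tsupport φ)
    (hφ.tsupport_subset.trans Ioo_subset_Icc_self)

lemma continuous (hφ : IsCutoff φ a b) : Continuous φ := hφ.contDiff.continuous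

lemma sq_mul (hφ : IsCutoff φ a b) : IsCutoff (fun x => x ^ 2 * φ x) a b where
  contDiff := by have := hφ.contDiff; fun_prop
  nonneg x := mul_nonneg (sq_nonneg x) (hφ.nonneg x)
  tsupport_subset := (tsupport_mul_subset_right (f := fun x : ℝ => x ^ 2)).trans hφ.tsupport_subset

lemma integrable (hφ : IsCutoff φ a b) : Integrable φ :=
  hφ.continuous.integrable_of_hasCompactSupport hφ.hasCompactSupport

lemma integrable_mul_of_continuous (hφ : IsCutoff φ a b) (hG : Continuous G) :
    Integrable fun x => φ x * G x :=
  (hφ.continuous.mul hG).integrable_of_hasCompactSupport hφ.hasCompactSupport.mul_right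

lemma integrable_mul (hφ : IsCutoff φ a b) {B : ℝ} (hG : AEStronglyMeasurable G)
    (hB : ∀ x ∈ Ioo a b, |G x| ≤ B) : Integrable fun x => φ x * G x := by
  refine (hφ.integrable.mul_const B).mono' (hφ.integrable.aestronglyMeasurable.mul hG)
    (ae_of_all _ fun x => ?_)
  rw [norm_mul, norm_eq_abs, norm_eq_abs, abs_of_nonneg (hφ.nonneg x)]
  by_cases hx : x ∈ Ioo a b
  · exact mul_le_mul_of_nonneg_left (hB x hx) (hφ.nonneg x)
  · rw [hφ.eq_zero hx, zero_mul, zero_mul]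

end IsCutoff

lemma abs_deriv_le_of_lipschitzOnWith_Icc {g : ℝ → ℝ} {a b : ℝ} {K : NNReal}
    (hg : LipschitzOnWith K g (Icc a b)) {x : ℝ} (hx : x ∈ Ioo a b) : |deriv g x| ≤ K :=
  norm_deriv_le_of_lipschitzOn (Icc_mem_nhds hx.1 hx.2) hg

lemma IsCutoff.integrable_mul_mul_deriv_pow {φ c g : ℝ → ℝ} {a b : ℝ} {K : NNReal}
    (hφ : IsCutoff φ a b) (hc : Continuous c) (hg : LipschitzOnWith K g (Icc a b)) (k : ℕ) :
    Integrable fun x => φ x * (c x * deriv g x ^ k) := by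
  obtain ⟨C, hC⟩ := isCompact_Icc.exists_bound_of_continuousOn (hc.continuousOn (s := Icc a b))
  refine hφ.integrable_mul (B := C * K ^ k) (hc.aestronglyMeasurable.mul
    ((measurable_deriv g).pow_const k).aestronglyMeasurable) fun x hx => ?_
  have hcx := hC x (Ioo_subset_Icc_self hx)
  rw [abs_mul, abs_pow, ← norm_eq_abs (c x)]
  have := (norm_nonneg _).trans hcx
  gcongr
  exact abs_deriv_le_of_lipschitzOnWith_Icc hg hx

lemma integral_integral_add_right {G : ℝ → ℝ} (hG : Integrable G) {H : ℝ} (hH : 0 ≤ H) :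
    (Integrable fun x => ∫ y in x..x + H, G y) ∧ ∫ x, ∫ y in x..x + H, G y = H * ∫ x, G x := by
  set χ : ℝ → ℝ := indicator (Ioc (-H) 0) fun _ => 1 with hχdef
  have hχ : Integrable χ := (integrableOn_const (by simp)).integrable_indicator measurableSet_Ioc
  have hχint : ∫ y, χ y = H := by simp [χ, integral_indicator, hH]
  have hconv : (fun x => ∫ y in x..x + H, G y) =
      convolution χ G (ContinuousLinearMap.mul ℝ ℝ) volume := by
    funext x
    calc ∫ y in x..x + H, G y = ∫ r in -H..0, G (x - r) := by
          rw [intervalIntegral.integral_comp_sub_left, sub_zero, sub_neg_eq_add]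
      _ = ∫ r, indicator (Ioc (-H) 0) (fun r => G (x - r)) r := by
          rw [intervalIntegral.integral_of_le (neg_nonpos.2 hH),
            integral_indicator measurableSet_Ioc]
      _ = ∫ r, χ r * G (x - r) := by simp only [hχdef, indicator_apply, ite_mul, one_mul, zero_mul]
  rw [hconv]
  refine ⟨hχ.integrable_convolution _ hG, ?_⟩
  rw [integral_convolution _ hχ hG, hχint]
  rfl

/-- A lower bound for `w * g'²` that involves no derivative of `g` and so is stable under
pointwise convergence: `max 0 (w x - L * H)` bounds from below an `L`-Lipschitz weight `w ≥ 0` on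
`[x, x + H]`. -/
noncomputable def coarseDissipation (w : ℝ → ℝ) (L H : ℝ) (g : ℝ → ℝ) (x : ℝ) : ℝ :=
  max 0 (w x - L * H) * ((g (x + H) - g x) / H) ^ 2

lemma coarseDissipation_nonneg (w : ℝ → ℝ) (L H : ℝ) (g : ℝ → ℝ) (x : ℝ) :
    0 ≤ coarseDissipation w L H g x :=
  mul_nonneg (le_max_left _ _) (sq_nonneg _)

section

variable {w g : ℝ → ℝ} {a b H : ℝ} {K L : NNReal}

lemma sq_slope_le_integral_sq_deriv (hg : LipschitzOnWith K g (Icc a (a + H))) (hH : 0 < H) :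
    IntervalIntegrable (fun y => deriv g y ^ 2) volume a (a + H) ∧
      ((g (a + H) - g a) / H) ^ 2 ≤ (∫ y in a..a + H, deriv g y ^ 2) / H := by
  set m := (g (a + H) - g a) / H
  have hac : AbsolutelyContinuousOnInterval g a (a + H) := by
    refine LipschitzOnWith.absolutelyContinuousOnInterval (K := K) ?_
    rwa [uIcc_of_le (by linarith)]
  have hd := hac.intervalIntegrable_deriv
  have hsq : IntervalIntegrable (fun y => deriv g y ^ 2) volume a (a + H) := by
    refine (intervalIntegrable_const (c := (K : ℝ) ^ 2)).mono_fun'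
      ((measurable_deriv g).pow_const 2).aestronglyMeasurable ?_
    rw [uIoc_of_le (by linarith), ← restrict_Ioo_eq_restrict_Ioc]
    filter_upwards [ae_restrict_mem measurableSet_Ioo] with y hy
    rw [norm_pow, norm_eq_abs]
    gcongr
    exact abs_deriv_le_of_lipschitzOnWith_Icc hg hy
  refine ⟨hsq, ?_⟩
  have hm : ∫ y in a..a + H, deriv g y = m * H := by
    rw [hac.integral_deriv_eq_sub, div_mul_cancel₀ _ hH.ne']
  have hexp : ∫ y in a..a + H, (deriv g y - m) ^ 2 =
      (∫ y in a..a + H, deriv g y ^ 2) - m ^ 2 * H := by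
    simp only [sub_sq, mul_right_comm _ _ m]
    rw [intervalIntegral.integral_add (hsq.sub (hd.const_mul _))
      intervalIntegrable_const, intervalIntegral.integral_sub hsq (hd.const_mul _),
      intervalIntegral.integral_const_mul, hm, intervalIntegral.integral_const, smul_eq_mul]
    ring
  have hnn : 0 ≤ ∫ y in a..a + H, (deriv g y - m) ^ 2 :=
    intervalIntegral.integral_nonneg (by linarith) fun y _ => sq_nonneg _
  rw [le_div_iff₀ hH]
  linarith

lemma integral_coarseDissipation_le (hw : IsCutoff w a b) (hwL : LipschitzWith L w)
    (hg : LipschitzOnWith K g (Icc a b)) (hH : 0 < H) :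
    ∫ x, coarseDissipation w L H g x ≤ ∫ x, w x * deriv g x ^ 2 := by
  have hG : Integrable fun x => w x * deriv g x ^ 2 := by
    simpa only [one_mul] using hw.integrable_mul_mul_deriv_pow (continuous_const (y := 1)) hg 2
  obtain ⟨hint, havg⟩ := integral_integral_add_right hG hH.le
  have hpt : ∀ x, coarseDissipation w L H g x ≤
      (∫ y in x..x + H, w y * deriv g y ^ 2) / H := by
    intro x
    have hnn : 0 ≤ ∫ y in x..x + H, w y * deriv g y ^ 2 := intervalIntegral.integral_nonneg
      (by linarith) fun y _ => mul_nonneg (hw.nonneg y) (sq_nonneg _)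
    rcases le_or_gt (w x - L * H) 0 with hx | hx
    · rw [coarseDissipation, max_eq_left hx, zero_mul]
      positivity
    have hlow : ∀ y ∈ Icc x (x + H), w x - L * H ≤ w y := fun y hy => by
      have h₁ := (le_abs_self _).trans (hwL.dist_le_mul x y)
      rw [dist_comm, Real.dist_eq, abs_of_nonneg (sub_nonneg.2 hy.1)] at h₁
      have h₂ : (L : ℝ) * (y - x) ≤ L * H := by gcongr; linarith [hy.2]
      linarith
    have hsub : Icc x (x + H) ⊆ Icc a b := fun y hy => Ioo_subset_Icc_self <| by
      by_contra hy'
      linarith [hlow y hy, hw.eq_zero hy']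
    obtain ⟨hsq, hle⟩ := sq_slope_le_integral_sq_deriv (hg.mono hsub) hH
    rw [coarseDissipation, max_eq_right hx.le]
    calc (w x - L * H) * ((g (x + H) - g x) / H) ^ 2
        ≤ (w x - L * H) * ((∫ y in x..x + H, deriv g y ^ 2) / H) := by gcongr
      _ = (∫ y in x..x + H, (w x - L * H) * deriv g y ^ 2) / H := by
          rw [intervalIntegral.integral_const_mul, mul_div_assoc]
      _ ≤ (∫ y in x..x + H, w y * deriv g y ^ 2) / H := by
          gcongr
          exact intervalIntegral.integral_mono_on (by linarith) (hsq.const_mul _)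
            hG.intervalIntegrable fun y hy => by gcongr; exact hlow y hy
  calc ∫ x, coarseDissipation w L H g x
      ≤ ∫ x, (∫ y in x..x + H, w y * deriv g y ^ 2) / H :=
        integral_mono_of_nonneg (ae_of_all _ (coarseDissipation_nonneg w L H g))
          (hint.div_const H) (ae_of_all _ hpt)
    _ = ∫ x, w x * deriv g x ^ 2 := by
        rw [integral_div, havg, mul_div_cancel_left₀ _ hH.ne']

end

/-- What is left of the transport, nonlinear and zeroth-order terms of the energy balance, and of
`x² (y²)''`, once every derivative of `y` has been moved onto the cutoff `φ`. -/
noncomputable def fluxWeight (φ : ℝ → ℝ) (x y : ℝ) : ℝ :=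
  (x ^ 2 * deriv (deriv φ) x + (4 * x - x ^ 2) * deriv φ x + (2 * x - 2) * φ x) * y ^ 2
    - 4 / 3 * deriv φ x * y ^ 3

lemma deriv_deriv_mul {f g : ℝ → ℝ} (hf : ContDiff ℝ 2 f) (hg : ContDiff ℝ 2 g) (x : ℝ) :
    deriv (deriv fun x => f x * g x) x =
      deriv (deriv f) x * g x + 2 * (deriv f x * deriv g x) + f x * deriv (deriv g) x := by
  have hdiff : ∀ {h : ℝ → ℝ}, ContDiff ℝ 2 h → Differentiable ℝ h ∧ Differentiable ℝ (deriv h) :=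
    fun hh => ⟨hh.differentiable two_ne_zero, (hh.deriv' (n := 1)).differentiable one_ne_zero⟩
  have hd : deriv (fun x => f x * g x) = fun x => deriv f x * g x + f x * deriv g x :=
    funext fun y => deriv_fun_mul ((hdiff hf).1 y) ((hdiff hg).1 y)
  rw [hd, ((((hdiff hf).2 x).hasDerivAt.fun_mul ((hdiff hg).1 x).hasDerivAt).fun_add
    (((hdiff hf).1 x).hasDerivAt.fun_mul ((hdiff hg).2 x).hasDerivAt)).deriv]
  ring

section

variable {φ g : ℝ → ℝ} {a b : ℝ} {K : NNReal}

lemma IsCutoff.contDiff_deriv (hφ : IsCutoff φ a b) : ContDiff ℝ 1 (deriv φ) :=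
  ContDiff.deriv' hφ.contDiff

lemma IsCutoff.deriv_sq_mul (hφ : IsCutoff φ a b) :
    deriv (fun x => x ^ 2 * φ x) = fun x => 2 * x * φ x + x ^ 2 * deriv φ x := by
  funext x
  have hd := (hφ.contDiff.differentiable two_ne_zero x).hasDerivAt
  rw [((hasDerivAt_pow 2 x).fun_mul hd).deriv]
  ring

lemma IsCutoff.deriv_deriv_sq_mul (hφ : IsCutoff φ a b) (x : ℝ) :
    deriv (deriv fun x => x ^ 2 * φ x) x =
      x ^ 2 * deriv (deriv φ) x + 4 * x * deriv φ x + 2 * φ x := by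
  have hsq : deriv (fun x : ℝ => x ^ 2) = fun x => 2 * x := funext fun x => by simp
  rw [deriv_deriv_mul (by fun_prop : ContDiff ℝ 2 fun x : ℝ => x ^ 2) hφ.contDiff, hsq,
    deriv_const_mul_field', deriv_id'']
  ring

lemma IsCutoff.integrable_deriv_mul {G : ℝ → ℝ} (hφ : IsCutoff φ a b) (hG : Continuous G) :
    Integrable fun x => deriv φ x * G x :=
  (hφ.contDiff_deriv.continuous.mul hG).integrable_of_hasCompactSupport
    hφ.hasCompactSupport.deriv.mul_right

lemma IsCutoff.integrable_deriv_deriv_mul {G : ℝ → ℝ} (hφ : IsCutoff φ a b) (hG : Continuous G) :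
    Integrable fun x => deriv (deriv φ) x * G x :=
  ((hφ.contDiff_deriv.continuous_deriv le_rfl).mul hG).integrable_of_hasCompactSupport
    hφ.hasCompactSupport.deriv.deriv.mul_right

lemma integral_fluxWeight_eq (hab : a ≤ b) (hφ : IsCutoff φ a b) (hgc : Continuous g)
    (hg : LipschitzOnWith K g (Icc a b)) :
    (∫ x, φ x * (2 * x ^ 2 * (g x * deriv g x) + 4 * (g x ^ 2 * deriv g x)
      + (4 * x - 4) * g x ^ 2)) + ∫ x, deriv (deriv fun x => x ^ 2 * φ x) x * g x ^ 2 =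
      ∫ x, fluxWeight φ x (g x) := by
  have hac : AbsolutelyContinuousOnInterval g a b :=
    LipschitzOnWith.absolutelyContinuousOnInterval (uIcc_of_le hab ▸ hg)
  have hdrift : ∫ x, x ^ 2 * φ x * (2 * g x * deriv g x ^ 1) =
      -∫ x, deriv (fun x => x ^ 2 * φ x) x * g x ^ 2 := by
    rw [← integral_mul_pow_mul_deriv (hφ.sq_mul.contDiff.of_le one_le_two)
      hφ.sq_mul.tsupport_subset hac 1]
    norm_num
  have hcubic : ∫ x, φ x * (4 * g x ^ 2 * deriv g x ^ 1) =
      -(4 / 3) * ∫ x, deriv φ x * g x ^ 3 := by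
    rw [neg_mul_comm, ← integral_mul_pow_mul_deriv (hφ.contDiff.of_le one_le_two)
      hφ.tsupport_subset hac 2, ← integral_const_mul]
    congr with x
    norm_num
    ring
  have hA : Integrable fun x => x ^ 2 * φ x * (2 * g x * deriv g x ^ 1) :=
    hφ.sq_mul.integrable_mul_mul_deriv_pow (by fun_prop) hg 1
  have hB : Integrable fun x => φ x * (4 * g x ^ 2 * deriv g x ^ 1) :=
    hφ.integrable_mul_mul_deriv_pow (by fun_prop) hg 1
  have hC : Integrable fun x => φ x * ((4 * x - 4) * g x ^ 2) :=
    hφ.integrable_mul_of_continuous (by fun_prop)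
  have hD := hφ.sq_mul.integrable_deriv_deriv_mul (G := fun x => g x ^ 2) (by fun_prop)
  have hA' := hφ.sq_mul.integrable_deriv_mul (G := fun x => g x ^ 2) (by fun_prop)
  have hB' := hφ.integrable_deriv_mul (G := fun x => g x ^ 3) (by fun_prop)
  calc _ = ((-∫ x, deriv (fun x => x ^ 2 * φ x) x * g x ^ 2) +
        -(4 / 3) * ∫ x, deriv φ x * g x ^ 3) + (∫ x, φ x * ((4 * x - 4) * g x ^ 2)) +
        ∫ x, deriv (deriv fun x => x ^ 2 * φ x) x * g x ^ 2 := by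
        rw [← hdrift, ← hcubic, ← integral_add hA hB, ← integral_add (hA.fun_add hB) hC]
        congr with x
        ring
    _ = _ := by
        rw [← integral_neg, ← integral_const_mul, ← integral_add hA'.fun_neg (hB'.const_mul _),
          ← integral_add (hA'.fun_neg.fun_add (hB'.const_mul _)) hC, ← integral_add
            ((hA'.fun_neg.fun_add (hB'.const_mul _)).fun_add hC) hD]
        congr with x
        rw [hφ.deriv_deriv_sq_mul, hφ.deriv_sq_mul, fluxWeight]
        ring

lemma integral_mul_rate_add_eq (hab : a ≤ b) (hφ : IsCutoff φ a b) (hgc : Continuous g)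
    (hg : LipschitzOnWith K g (Icc a b)) (c : ℝ) :
    (∫ x, φ x * (2 * x ^ 2 * (g x * deriv g x) + 4 * (g x ^ 2 * deriv g x)
      + (4 * x - 4) * g x ^ 2 - x ^ 2 * deriv g x ^ 2 + c))
      + ∫ x, deriv (deriv fun x => x ^ 2 * φ x) x * g x ^ 2 =
      (∫ x, fluxWeight φ x (g x)) - (∫ x, x ^ 2 * φ x * deriv g x ^ 2) + c * ∫ x, φ x := by
  have hflux : Integrable fun x => φ x * (2 * x ^ 2 * (g x * deriv g x)
      + 4 * (g x ^ 2 * deriv g x) + (4 * x - 4) * g x ^ 2) := by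
    have h₁ := hφ.integrable_mul_mul_deriv_pow (c := fun x => 2 * x ^ 2 * g x + 4 * g x ^ 2)
      (by fun_prop) hg 1
    have h₀ := hφ.integrable_mul_of_continuous (G := fun x => (4 * x - 4) * g x ^ 2) (by fun_prop)
    refine (h₁.add h₀).congr (ae_of_all _ fun x => ?_)
    simp only [Pi.add_apply]
    ring
  have hdissip : Integrable fun x => x ^ 2 * φ x * deriv g x ^ 2 := by
    simpa only [one_mul] using
      hφ.sq_mul.integrable_mul_mul_deriv_pow (continuous_const (y := 1)) hg 2
  rw [← integral_fluxWeight_eq hab hφ hgc hg, add_sub_right_comm, add_right_comm,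
    ← integral_sub hflux hdissip, ← integral_const_mul,
    ← integral_add (hflux.sub' hdissip) (hφ.integrable.const_mul c)]
  congr 2 with x
  ring

end

/-! ### The energy inequality on a time slice -/

lemma exists_lipschitzOnWith_sqrt {f : ℝ → ℝ} {s : Set ℝ} {K : NNReal} {η : ℝ}
    (hf : LipschitzOnWith K f s) (hη : 0 < η) (hle : ∀ x ∈ s, η ≤ f x) :
    ∃ K', LipschitzOnWith K' (fun x => √(f x)) s := by
  refine ⟨K / (√η).toNNReal, LipschitzOnWith.of_dist_le_mul fun x hx y hy => ?_⟩
  have hx' := sqrt_le_sqrt (hle x hx)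
  have hη' := sqrt_pos.2 hη
  have hdiff : |√(f x) - √(f y)| * (√(f x) + √(f y)) = |f x - f y| := by
    rw [← abs_of_nonneg (add_nonneg (sqrt_nonneg (f x)) (sqrt_nonneg (f y))), ← abs_mul,
      mul_comm, ← sq_sub_sq, sq_sqrt (hη.le.trans (hle x hx)), sq_sqrt (hη.le.trans (hle y hy))]
  have hdist := hf.dist_le_mul x hx y hy
  rw [Real.dist_eq, ← hdiff] at hdist
  rw [NNReal.coe_div, coe_toNNReal _ hη'.le, div_mul_eq_mul_div, le_div_iff₀ hη', Real.dist_eq]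
  refine le_trans ?_ hdist
  gcongr
  linarith [sqrt_nonneg (f y)]

section

variable {u : ℝ → ℝ → ℝ} {M D η a b x t ν P Q κ : ℝ}

lemma exists_convexOn_of_isEnergySubjet (ha : 0 < a) (hu : Continuous fun x => u x t)
    (hj : ∀ x ∈ Ioo a b, ∃ ν P Q κ, IsEnergySubjet u M D η x t ν P Q κ) :
    ∃ C, ConvexOn ℝ (Ioo a b) fun x => u x t + C / 2 * x ^ 2 := by
  set B := (D + 4 * b * M ^ 2 + (M * (b ^ 2 + 2 * M)) ^ 2 / (2 * a ^ 2)) / a ^ 2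
  refine ⟨B + 1, convexOn_add_sq_of_lt_secondDiff hu.continuousOn fun x hx => ?_⟩
  obtain ⟨ν, P, Q, κ, hx'⟩ := hj x hx
  filter_upwards [hx'.le_secondDiff (1 / 2) one_half_pos] with h hh
  linarith [hx'.le_two_mul_sq_add ha (Ioo_subset_Icc_self hx)]

lemma IsEnergySubjet.eventually_quotient_le {g : ℝ → ℝ} {p : ℝ}
    (hj : IsEnergySubjet u M D η x t ν P Q κ) (ha : 0 < a) (hx : a ≤ x)
    (hgu : ∀ y, g y ^ 2 = u y t) (hgx : 0 < g x) (hg : HasDerivAt g p x) {ε : ℝ} (hε : 0 < ε) :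
    ∀ᶠ h in 𝓝[>] 0, (u x t - u x (t - h)) / h - x ^ 2 * secondDiff (fun y => u y t) x h ≤
      2 * x ^ 2 * (g x * p) + 4 * (g x ^ 2 * p) + (4 * x - 4) * g x ^ 2 - x ^ 2 * p ^ 2
        + (4 * M ^ 2 / a ^ 2 + 4) * η + ε := by
  have hp : g x * p = ν * P := by
    have := hj.eq_of_hasDerivAt _ ((hg.fun_pow 2).congr_of_eventuallyEq
      (Eventually.of_forall fun y => (hgu y).symm))
    norm_num at this
    linarith
  have hx₀ : 0 < x := ha.trans_le hx
  have hsmall : ∀ᶠ h in 𝓝[>] 0, D * h < ε / 2 := by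
    refine Tendsto.eventually_lt_const (half_pos hε) (tendsto_nhdsWithin_of_tendsto_nhds ?_)
    simpa using (continuous_const_mul D).tendsto 0
  filter_upwards [hj.le_secondDiff (ε / (2 * x ^ 2)) (by positivity), hsmall,
    self_mem_nhdsWithin] with h hsd hDh hh
  have hcurv : x ^ 2 * (2 * P ^ 2 + 2 * ν * Q) - ε / 2 ≤
      x ^ 2 * secondDiff (fun y => u y t) x h := by
    have := mul_le_mul_of_nonneg_left hsd (sq_nonneg x)
    have hcancel : x ^ 2 * (ε / (2 * x ^ 2)) = ε / 2 := by field_simp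
    linarith
  linarith [hj.rate_sub_le ha hx hgx (hgu x) hp, hj.backward_slope_le h hh]

end

section

variable {u : ℝ → ℝ → ℝ} {φ : ℝ → ℝ} {M D η a₀ b₀ a b t : ℝ}

lemma exists_lipschitzOnWith_sqrt_of_isEnergySubjet (ha₀ : 0 < a₀) (ha : a₀ < a) (hb : b < b₀)
    (hη : 0 < η) (hu : Continuous fun x => u x t) (hηu : ∀ x, η ≤ u x t)
    (hj : ∀ x ∈ Ioo a₀ b₀, ∃ ν P Q κ, IsEnergySubjet u M D η x t ν P Q κ) :
    ∃ K, LipschitzOnWith K (fun x => √(u x t)) (Icc a b) := by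
  obtain ⟨C, hC⟩ := exists_convexOn_of_isEnergySubjet ha₀ hu hj
  obtain ⟨L, hL⟩ := exists_lipschitzOnWith_Icc_of_convexOn hu hC ha hb
  exact exists_lipschitzOnWith_sqrt hL hη fun x _ => hηu x

lemma exists_eventually_quotient_le_of_isEnergySubjet (ha₀ : 0 < a₀) (ha : a₀ < a) (hb : b < b₀)
    (hu : Continuous fun x => u x t)
    (hj : ∀ x ∈ Ioo a₀ b₀, ∃ ν P Q κ, IsEnergySubjet u M D η x t ν P Q κ) :
    ∃ C, ∀ᶠ h in 𝓝[>] 0, ∀ x ∈ Ioo a b,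
      (u x t - u x (t - h)) / h - x ^ 2 * secondDiff (fun y => u y t) x h ≤ 2 * D + x ^ 2 * C := by
  obtain ⟨C, hC⟩ := exists_convexOn_of_isEnergySubjet ha₀ hu hj
  refine ⟨C, ?_⟩
  filter_upwards [Ioo_mem_nhdsGT (show 0 < min 1 (min (a - a₀) (b₀ - b)) by
    simp [ha, hb])] with h hh x hx
  simp only [mem_Ioo, lt_min_iff] at hh
  obtain ⟨h₀, h₁, ha', hb'⟩ := hh
  obtain ⟨ν, P, Q, κ, hx'⟩ := hj x ⟨ha.trans hx.1, hx.2.trans hb⟩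
  have hsd := neg_le_secondDiff_of_convexOn hC h₀.ne' (x := x)
    ⟨by linarith [hx.1], by linarith [hx.2]⟩ ⟨by linarith [hx.1], by linarith [hx.2]⟩
  have hD := hx'.abs_rate_le
  have hDh : D * h ≤ D * 1 := by gcongr; exact (abs_nonneg κ).trans hD
  linarith [hx'.backward_slope_le h h₀, le_of_abs_le hD,
    mul_le_mul_of_nonneg_left hsd (sq_nonneg x)]

lemma eventually_integral_quotient_le (ha₀ : 0 < a₀) (ha : a₀ < a) (hb : b < b₀) (hab : a ≤ b)
    (hu : Continuous fun p : ℝ × ℝ => u p.1 p.2)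
    (hj : ∀ x ∈ Ioo a₀ b₀, ∃ ν P Q κ, IsEnergySubjet u M D η x t ν P Q κ)
    (hφ : IsCutoff φ a b) {g : ℝ → ℝ} {K : NNReal} (hg : LipschitzOnWith K g (Icc a b))
    (hgc : Continuous g) (hgu : ∀ x, g x ^ 2 = u x t) (hg₀ : ∀ x, 0 < g x)
    {ε : ℝ} (hε : 0 < ε) :
    ∀ᶠ h in 𝓝[>] 0,
      ∫ x, φ x * ((u x t - u x (t - h)) / h - x ^ 2 * secondDiff (fun y => u y t) x h) ≤
        (∫ x, φ x * (2 * x ^ 2 * (g x * deriv g x) + 4 * (g x ^ 2 * deriv g x)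
          + (4 * x - 4) * g x ^ 2 - x ^ 2 * deriv g x ^ 2 + (4 * M ^ 2 / a₀ ^ 2 + 4) * η)) + ε := by
  have hut : Continuous fun x => u x t := by fun_prop
  obtain ⟨C, hC⟩ := exists_eventually_quotient_le_of_isEnergySubjet ha₀ ha hb hut hj
  have hac : AbsolutelyContinuousOnInterval g a b :=
    LipschitzOnWith.absolutelyContinuousOnInterval (uIcc_of_le hab ▸ hg)
  refine eventually_integral_le_add_of_eventually_le ?_
    (hφ.integrable_mul_of_continuous (G := fun x => 2 * D + x ^ 2 * C) (by fun_prop))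
    (Eventually.of_forall fun h => hφ.integrable_mul_of_continuous ?_) ?_ ?_ hε
  · have h₁ := hφ.integrable_mul_mul_deriv_pow (c := fun x => 2 * x ^ 2 * g x + 4 * g x ^ 2)
      (by fun_prop) hg 1
    have h₂ := hφ.integrable_mul_mul_deriv_pow (c := fun x => x ^ 2) (by fun_prop) hg 2
    have h₀ := hφ.integrable_mul_of_continuous
      (G := fun x => (4 * x - 4) * g x ^ 2 + (4 * M ^ 2 / a₀ ^ 2 + 4) * η) (by fun_prop)
    refine ((h₁.sub h₂).add h₀).congr (ae_of_all _ fun x => ?_)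
    simp only [Pi.add_apply, Pi.sub_apply]
    ring
  · unfold secondDiff
    fun_prop
  · filter_upwards [hC] with h hh
    refine ae_of_all _ fun x => ?_
    by_cases hx : x ∈ Ioo a b
    · exact mul_le_mul_of_nonneg_left (hh x hx) (hφ.nonneg x)
    · simp [hφ.eq_zero hx]
  · filter_upwards [hac.ae_differentiableAt] with x hdiff δ hδ
    rcases (hφ.nonneg x).eq_or_lt with hx | hx
    · simp [← hx, hδ.le]
    have hmem : x ∈ Ioo a b := by
      by_contra h
      exact hx.ne' (hφ.eq_zero h)
    obtain ⟨ν, P, Q, κ, hx'⟩ := hj x ⟨ha.trans hmem.1, hmem.2.trans hb⟩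
    filter_upwards [hx'.eventually_quotient_le ha₀ (ha.trans hmem.1).le hgu (hg₀ x)
      (hdiff (uIcc_of_le hab ▸ Ioo_subset_Icc_self hmem)).hasDerivAt (div_pos hδ hx)] with h hh
    refine (mul_le_mul_of_nonneg_left hh hx.le).trans_eq ?_
    rw [mul_add, mul_div_cancel₀ _ hx.ne']

lemma eventually_slope_integral_le (ha₀ : 0 < a₀) (ha : a₀ < a) (hb : b < b₀) (hab : a ≤ b)
    (hη : 0 < η) (hu : Continuous fun p : ℝ × ℝ => u p.1 p.2) (hηu : ∀ x, η ≤ u x t)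
    (hj : ∀ x ∈ Ioo a₀ b₀, ∃ ν P Q κ, IsEnergySubjet u M D η x t ν P Q κ)
    (hφ : IsCutoff φ a b) {L : NNReal} (hL : LipschitzWith L fun x => x ^ 2 * φ x) {H : ℝ}
    (hH : 0 < H) {ε : ℝ} (hε : 0 < ε) :
    ∀ᶠ h in 𝓝[>] 0, ((∫ x, φ x * u x t) - ∫ x, φ x * u x (t - h)) / h ≤
      (∫ x, fluxWeight φ x √(u x t)) -
        (∫ x, coarseDissipation (fun x => x ^ 2 * φ x) L H (fun x => √(u x t)) x)
        + (4 * M ^ 2 / a₀ ^ 2 + 4) * η * (∫ x, φ x) + ε := by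
  have hut : ∀ τ, Continuous fun x => u x τ := fun τ => by fun_prop
  obtain ⟨K, hK⟩ := exists_lipschitzOnWith_sqrt_of_isEnergySubjet ha₀ ha hb hη (hut t) hηu hj
  set g := fun x => √(u x t)
  have hgc : Continuous g := by fun_prop
  have hgu : ∀ x, g x ^ 2 = u x t := fun x => sq_sqrt (hη.le.trans (hηu x))
  have hfatou := eventually_integral_quotient_le ha₀ ha hb hab hu hj hφ hK hgc hgu
    (fun x => sqrt_pos.2 (hη.trans_le (hηu x))) (half_pos hε)
  have hcurv := (tendsto_integral_mul_secondDiff hφ.sq_mul.contDiff hφ.sq_mul.hasCompactSupport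
    (hut t)).eventually_lt_const (lt_add_of_pos_right _ (half_pos hε))
  have hcoarse := integral_coarseDissipation_le hφ.sq_mul hL hK hH
  have hrate := integral_mul_rate_add_eq hab hφ hgc hK ((4 * M ^ 2 / a₀ ^ 2 + 4) * η)
  simp only [hgu] at hrate hfatou
  filter_upwards [hfatou, hcurv] with h hh hhc
  have hint : ∀ τ, Integrable fun x => φ x * u x τ := fun τ =>
    hφ.integrable_mul_of_continuous (hut τ)
  have hquot : ∫ x, φ x * ((u x t - u x (t - h)) / h - x ^ 2 * secondDiff (fun y => u y t) x h) =
      ((∫ x, φ x * u x t) - ∫ x, φ x * u x (t - h)) / h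
        - ∫ x, x ^ 2 * φ x * secondDiff (fun y => u y t) x h := by
    rw [← integral_sub (hint _) (hint _), ← integral_div, ← integral_sub
      (((hint _).sub' (hint _)).div_const h) (hφ.sq_mul.integrable_mul_of_continuous (by
        unfold secondDiff; fun_prop))]
    congr with x
    ring
  linarith

end

/-! ### Integration in time -/

lemma sub_le_integral_of_eventually_slope_le {U F : ℝ → ℝ} {s t : ℝ} (hst : s ≤ t)
    (hU : Continuous U) (hF : Continuous F)
    (h : ∀ τ ∈ Ioc s t, ∀ ε > 0, ∀ᶠ h in 𝓝[>] 0, (U τ - U (τ - h)) / h ≤ F τ + ε) :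
    U t - U s ≤ ∫ τ in s..t, F τ := by
  have hB : ∀ σ, HasDerivAt (fun σ => -U t + ∫ r in -t..σ, F (-r)) (F (-σ)) σ := fun σ =>
    ((hF.comp continuous_neg).integral_hasStrictDerivAt (-t) σ).hasDerivAt.const_add (-U t)
  have hslope : ∀ σ ∈ Ico (-t) (-s), ∀ r, F (-σ) < r →
      ∃ᶠ z in 𝓝[>] σ, slope (fun σ => -U (-σ)) σ z < r := by
    intro σ hσ r hr
    obtain ⟨r', hr'⟩ := exists_between hr
    have hev := h (-σ) ⟨by linarith [hσ.2], by linarith [hσ.1]⟩ (r' - F (-σ)) (by linarith)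
    have hmap : Tendsto (fun z => z - σ) (𝓝[>] σ) (𝓝[>] 0) := by
      refine tendsto_nhdsWithin_iff.2 ⟨tendsto_nhdsWithin_of_tendsto_nhds ?_, ?_⟩
      · simpa using (continuous_sub_right σ).tendsto σ
      · filter_upwards [self_mem_nhdsWithin] with z hz using sub_pos.2 (mem_Ioi.1 hz)
    refine (hmap.eventually hev).frequently.mono fun z hz => ?_
    rw [slope_def_field, show -U (-z) - -U (-σ) = U (-σ) - U (-σ - (z - σ)) by ring_nf]
    linarith
  have := image_le_of_liminf_slope_right_le_deriv_boundary
    (f := fun σ => -U (-σ)) (by fun_prop) (by simp)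
    (fun σ _ => (hB σ).continuousAt.continuousWithinAt)
    (fun σ _ => (hB σ).hasDerivWithinAt) hslope (right_mem_Icc.2 (neg_le_neg hst))
  simp only [intervalIntegral.integral_comp_neg, neg_neg] at this
  linarith

lemma continuous_integral_of_eq_zero_off {f : ℝ → ℝ → ℝ} {a b : ℝ}
    (hf : Continuous fun p : ℝ × ℝ => f p.1 p.2) (hzero : ∀ τ, ∀ x ∉ Icc a b, f τ x = 0) :
    Continuous fun τ => ∫ x, f τ x :=
  continuousOn_univ.1 <| continuousOn_integral_of_compact_support isCompact_Icc hf.continuousOn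
    fun τ x _ hx => hzero τ x hx

lemma intervalIntegral_setIntegral_eq_setIntegral_prod {f : ℝ → ℝ → ℝ} {s t : ℝ} {S : Set ℝ}
    (hst : s ≤ t) (hf : IntegrableOn (fun p : ℝ × ℝ => f p.1 p.2) (Icc s t ×ˢ S)) :
    ∫ τ in s..t, ∫ x in S, f τ x = ∫ p in Icc s t ×ˢ S, f p.1 p.2 := by
  rw [intervalIntegral.integral_of_le hst, ← integral_Icc_eq_integral_Ioc]
  exact (setIntegral_prod (fun p : ℝ × ℝ => f p.1 p.2) hf).symm

lemma tendsto_setIntegral_comp {α ι E : Type*} [MeasurableSpace α] {μ : Measure α}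
    [TopologicalSpace E] {l : Filter ι} [l.IsCountablyGenerated] {S : Set α} (hS : MeasurableSet S)
    (hμ : μ S ≠ ⊤) {Ψ : E → ℝ} (hΨ : Continuous Ψ) {K : Set E} (hK : IsCompact K) {f : ι → α → E}
    {f₀ : α → E} (hmeas : ∀ k, AEStronglyMeasurable (fun x => Ψ (f k x)) (μ.restrict S))
    (hmem : ∀ k, ∀ x ∈ S, f k x ∈ K)
    (hlim : ∀ x ∈ S, Tendsto (fun k => f k x) l (𝓝 (f₀ x))) :
    Tendsto (fun k => ∫ x in S, Ψ (f k x) ∂μ) l (𝓝 (∫ x in S, Ψ (f₀ x) ∂μ)) := by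
  have : IsFiniteMeasure (μ.restrict S) := ⟨by simpa using hμ.lt_top⟩
  obtain ⟨C, hC⟩ := hK.exists_bound_of_continuousOn hΨ.continuousOn
  refine tendsto_integral_filter_of_norm_le_const (Eventually.of_forall hmeas)
    ⟨C, Eventually.of_forall fun k => ?_⟩ ?_
  · filter_upwards [ae_restrict_mem hS] with x hx using hC _ (hmem k x hx)
  · filter_upwards [ae_restrict_mem hS] with x hx using (hΨ.tendsto _).comp (hlim x hx)

/-- `energyRate φ L H x (g x) (g (x + H))` is the integrand of the time derivative of `∫ φ g²`,
with the dissipation replaced by its coarse counterpart for the weight `x² φ`. -/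
noncomputable def energyRate (φ : ℝ → ℝ) (L H x y z : ℝ) : ℝ :=
  fluxWeight φ x y - max 0 (x ^ 2 * φ x - L * H) * ((z - y) / H) ^ 2

section

variable {φ : ℝ → ℝ} {a b L H : ℝ}

lemma IsCutoff.continuous_fluxWeight (hφ : IsCutoff φ a b) :
    Continuous fun p : ℝ × ℝ => fluxWeight φ p.1 p.2 := by
  have h := hφ.continuous
  have hd := hφ.contDiff_deriv.continuous
  have hdd := hφ.contDiff_deriv.continuous_deriv le_rfl
  unfold fluxWeight
  fun_prop

lemma IsCutoff.continuous_energyRate (hφ : IsCutoff φ a b) :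
    Continuous fun p : ℝ × ℝ × ℝ => energyRate φ L H p.1 p.2.1 p.2.2 := by
  have h := hφ.continuous
  have hflux := hφ.continuous_fluxWeight
  unfold energyRate
  fun_prop

lemma IsCutoff.fluxWeight_eq_zero (hφ : IsCutoff φ a b) {x : ℝ} (hx : x ∉ Ioo a b) (y : ℝ) :
    fluxWeight φ x y = 0 := by
  have hx' : x ∉ tsupport φ := fun h => hx (hφ.tsupport_subset h)
  have hd : deriv φ x = 0 := image_eq_zero_of_notMem_tsupport fun h => hx' (tsupport_deriv_subset h)
  have hdd : deriv (deriv φ) x = 0 := image_eq_zero_of_notMem_tsupport fun h =>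
    hx' (tsupport_deriv_subset (tsupport_deriv_subset h))
  simp [fluxWeight, hd, hdd, hφ.eq_zero hx]

lemma IsCutoff.energyRate_eq_zero (hφ : IsCutoff φ a b) (hL : 0 ≤ L * H) {x : ℝ}
    (hx : x ∉ Ioo a b) (y z : ℝ) : energyRate φ L H x y z = 0 := by
  simp [energyRate, hφ.fluxWeight_eq_zero hx, hφ.eq_zero hx, hL]

end

lemma IsCutoff.integral_energyRate {φ g : ℝ → ℝ} {a b L H : ℝ} (hφ : IsCutoff φ a b)
    (hL : 0 ≤ L * H) (hg : Continuous g) :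
    ∫ x, energyRate φ L H x (g x) (g (x + H)) =
      (∫ x, fluxWeight φ x (g x)) - ∫ x, coarseDissipation (fun x => x ^ 2 * φ x) L H g x := by
  have hflux : Continuous fun x => fluxWeight φ x (g x) :=
    hφ.continuous_fluxWeight.comp (continuous_id.prodMk hg)
  have hcoarse : Continuous fun x => coarseDissipation (fun x => x ^ 2 * φ x) L H g x := by
    have h := hφ.continuous
    unfold coarseDissipation
    fun_prop
  refine integral_sub
    (hflux.integrable_of_hasCompactSupport (.intro (K := Icc a b) isCompact_Icc fun x hx => ?_))
    (hcoarse.integrable_of_hasCompactSupport (.intro (K := Icc a b) isCompact_Icc fun x hx => ?_))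
  · exact hφ.fluxWeight_eq_zero (fun h => hx (Ioo_subset_Icc_self h)) _
  · simp [coarseDissipation, hφ.eq_zero fun h => hx (Ioo_subset_Icc_self h), hL]

section

variable {n : ℝ → ℝ → ℝ} {n₀ φ : ℝ → ℝ} {M a b s t H : ℝ} {L : NNReal}

lemma IsKompSol.exists_regularized_energy_le (hsol : IsKompSol n n₀)
    (hM : ∀ x t : ℝ, 0 < x → 0 < t → n x t ≤ M) (ha : 0 < a) (hab : a ≤ b) (hs : 0 < s)
    (hst : s ≤ t) (hφ : IsCutoff φ a b) (hL : LipschitzWith L fun x => x ^ 2 * φ x) (hH : 0 < H)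
    {η : ℝ} (hη : 0 < η) :
    ∃ u : ℝ → ℝ → ℝ, Continuous (fun p : ℝ × ℝ => u p.1 p.2) ∧
      (∀ x ∈ Ioo (a / 2) (b + 1), ∀ τ ∈ Icc s t,
        n x τ ^ 2 ≤ u x τ ∧ u x τ ≤ n x τ ^ 2 + 2 * η) ∧
      (∫ x in Icc a b, φ x * u x t) - ∫ x in Icc a b, φ x * u x s ≤
        (∫ p in Icc s t ×ˢ Icc a b, energyRate φ L H p.2 √(u p.2 p.1) √(u (p.2 + H) p.1))
          + (t - s) * ((4 * M ^ 2 / (a / 2) ^ 2 + 4) * η * ∫ x, φ x) := by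
  obtain ⟨u, D, hu, hηu, hj⟩ :=
    hsol.exists_regularization hM (a := a / 2) (b := b + 1) (t := t) (half_pos ha) hs hη
  refine ⟨u, hu, fun x hx τ hτ => ⟨(hj x hx τ hτ).1, (hj x hx τ hτ).2.1⟩, ?_⟩
  set c := (4 * M ^ 2 / (a / 2) ^ 2 + 4) * η * ∫ x, φ x
  let rate : ℝ → ℝ → ℝ := fun τ x => energyRate φ L H x √(u x τ) √(u (x + H) τ)
  have hφc := hφ.continuous
  have hφ₀ : ∀ x ∉ Icc a b, φ x = 0 := fun x hx => hφ.eq_zero fun h => hx (Ioo_subset_Icc_self h)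
  have hratec : Continuous fun p : ℝ × ℝ => rate p.1 p.2 :=
    hφ.continuous_energyRate.comp (by fun_prop :
      Continuous fun p : ℝ × ℝ => (p.2, √(u p.2 p.1), √(u (p.2 + H) p.1)))
  have hrate₀ : ∀ τ, ∀ x ∉ Icc a b, rate τ x = 0 := fun τ x hx =>
    hφ.energyRate_eq_zero (by positivity) (fun h => hx (Ioo_subset_Icc_self h)) _ _
  have hF := continuous_integral_of_eq_zero_off hratec hrate₀
  have hU : Continuous fun τ => ∫ x, φ x * u x τ :=
    continuous_integral_of_eq_zero_off (a := a) (b := b) (by fun_prop)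
      fun τ x hx => by rw [hφ₀ x hx, zero_mul]
  have hmain := sub_le_integral_of_eventually_slope_le hst hU (hF.add_const c)
    fun τ hτ ε hε => by
      have hτ' := Ioc_subset_Icc_self hτ
      rw [hφ.integral_energyRate (by positivity) (g := fun x => √(u x τ)) (by fun_prop)]
      exact eventually_slope_integral_le (half_pos ha) (half_lt_self ha) (lt_add_one b) hab hη hu
        (hηu · τ hτ') (fun x hx => (hj x hx τ hτ').2.2) hφ hL hH hε
  have hset : ∀ τ, ∫ x in Icc a b, φ x * u x τ = ∫ x, φ x * u x τ := fun τ =>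
    setIntegral_eq_integral_of_forall_compl_eq_zero fun x hx => by rw [hφ₀ x hx, zero_mul]
  rw [intervalIntegral.integral_add (hF.intervalIntegrable _ _) intervalIntegrable_const,
    intervalIntegral.integral_const, smul_eq_mul] at hmain
  rwa [hset, hset, ← intervalIntegral_setIntegral_eq_setIntegral_prod (f := rate) hst
    (hratec.continuousOn.integrableOn_compact (isCompact_Icc.prod isCompact_Icc)),
    show (fun τ => ∫ x in Icc a b, rate τ x) = fun τ => ∫ x, rate τ x from funext fun τ =>
      setIntegral_eq_integral_of_forall_compl_eq_zero (hrate₀ τ)]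

section

variable {u : ℕ → ℝ → ℝ → ℝ} {v : ℝ → ℝ → ℝ} {B : ℝ}

lemma tendsto_setIntegral_cutoff_mul (hφ : Continuous φ) {τ : ℝ}
    (hu : ∀ k, Continuous fun x => u k x τ)
    (hbd : ∀ k, ∀ x ∈ Icc a b, u k x τ ∈ Icc 0 B)
    (hlim : ∀ x ∈ Icc a b, Tendsto (fun k => u k x τ) atTop (𝓝 (v x τ ^ 2))) :
    Tendsto (fun k => ∫ x in Icc a b, φ x * u k x τ) atTop
      (𝓝 (∫ x in Icc a b, φ x * v x τ ^ 2)) :=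
  tendsto_setIntegral_comp (Ψ := fun p : ℝ × ℝ => φ p.1 * p.2) (f := fun k x => (x, u k x τ))
    (f₀ := fun x => (x, v x τ ^ 2)) measurableSet_Icc isCompact_Icc.measure_ne_top (by fun_prop)
    (isCompact_Icc.prod isCompact_Icc)
    (fun k => (hφ.mul (hu k)).aestronglyMeasurable)
    (fun k x hx => ⟨hx, hbd k x hx⟩) fun x hx => tendsto_const_nhds.prodMk_nhds (hlim x hx)

lemma tendsto_setIntegral_energyRate (hφ : IsCutoff φ a b) (hH : 0 ≤ H)
    (hu : ∀ k, Continuous fun p : ℝ × ℝ => u k p.1 p.2)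
    (hbd : ∀ k, ∀ x ∈ Icc a (b + H), ∀ τ ∈ Icc s t, u k x τ ∈ Icc 0 B)
    (hv : ∀ x ∈ Icc a (b + H), ∀ τ ∈ Icc s t, 0 ≤ v x τ)
    (hlim : ∀ x ∈ Icc a (b + H), ∀ τ ∈ Icc s t,
      Tendsto (fun k => u k x τ) atTop (𝓝 (v x τ ^ 2))) :
    Tendsto (fun k => ∫ p in Icc s t ×ˢ Icc a b,
      energyRate φ L H p.2 √(u k p.2 p.1) √(u k (p.2 + H) p.1)) atTop
      (𝓝 (∫ p in Icc s t ×ˢ Icc a b, energyRate φ L H p.2 (v p.2 p.1) (v (p.2 + H) p.1))) := by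
  have hsqrt : ∀ x ∈ Icc a (b + H), ∀ τ ∈ Icc s t,
      (∀ k, √(u k x τ) ∈ Icc 0 √B) ∧ Tendsto (fun k => √(u k x τ)) atTop (𝓝 (v x τ)) :=
    fun x hx τ hτ => ⟨fun k => ⟨sqrt_nonneg _, sqrt_le_sqrt (hbd k x hx τ hτ).2⟩, by
      simpa only [sqrt_sq (hv x hx τ hτ)] using (hlim x hx τ hτ).sqrt⟩
  have hleft : ∀ x ∈ Icc a b, x ∈ Icc a (b + H) := fun x hx => ⟨hx.1, by linarith [hx.2]⟩
  have hright : ∀ x ∈ Icc a b, x + H ∈ Icc a (b + H) := fun x hx =>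
    ⟨by linarith [hx.1], by linarith [hx.2]⟩
  refine tendsto_setIntegral_comp (Ψ := fun p : ℝ × ℝ × ℝ => energyRate φ L H p.1 p.2.1 p.2.2)
    (f := fun k p => (p.2, √(u k p.2 p.1), √(u k (p.2 + H) p.1)))
    (f₀ := fun p => (p.2, v p.2 p.1, v (p.2 + H) p.1))
    (measurableSet_Icc.prod measurableSet_Icc) (isCompact_Icc.prod isCompact_Icc).measure_ne_top
    hφ.continuous_energyRate (isCompact_Icc.prod (isCompact_Icc.prod isCompact_Icc))
    (fun k => (hφ.continuous_energyRate.comp ?_).aestronglyMeasurable)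
    (fun k p hp => ⟨hp.2, (hsqrt _ (hleft _ hp.2) _ hp.1).1 k,
      (hsqrt _ (hright _ hp.2) _ hp.1).1 k⟩)
    fun p hp => tendsto_const_nhds.prodMk_nhds
      ((hsqrt _ (hleft _ hp.2) _ hp.1).2.prodMk_nhds (hsqrt _ (hright _ hp.2) _ hp.1).2)
  have := hu k
  fun_prop

end

lemma IsKompSol.cutoff_energy_sub_le (hsol : IsKompSol n n₀) (ha : 0 < a) (hab : a ≤ b)
    (hs : 0 < s) (hst : s ≤ t) (hφ : IsCutoff φ a b) (hL : LipschitzWith L fun x => x ^ 2 * φ x)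
    (hH : H ∈ Ioo 0 1) :
    (∫ x in Icc a b, φ x * n x t ^ 2) - ∫ x in Icc a b, φ x * n x s ^ 2 ≤
      ∫ p in Icc s t ×ˢ Icc a b, energyRate φ L H p.2 (n p.2 p.1) (n (p.2 + H) p.1) := by
  obtain ⟨M, hM⟩ := hsol.bounded
  choose u hu hclose hle using fun k : ℕ =>
    hsol.exists_regularized_energy_le hM ha hab hs hst hφ hL hH.1 (Nat.one_div_pos_of_nat (n := k))
  have hη : Tendsto (fun k : ℕ => 1 / ((k : ℝ) + 1)) atTop (𝓝 0) :=
    tendsto_one_div_add_atTop_nhds_zero_nat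
  have hlim : ∀ x ∈ Ioo (a / 2) (b + 1), ∀ τ ∈ Icc s t,
      Tendsto (fun k => u k x τ) atTop (𝓝 (n x τ ^ 2)) := fun x hx τ hτ =>
    tendsto_of_tendsto_of_tendsto_of_le_of_le tendsto_const_nhds
      (by simpa using (hη.const_mul 2).const_add (n x τ ^ 2))
      (fun k => (hclose k x hx τ hτ).1) fun k => (hclose k x hx τ hτ).2
  have hbd : ∀ k, ∀ x ∈ Ioo (a / 2) (b + 1), ∀ τ ∈ Icc s t, u k x τ ∈ Icc 0 (M ^ 2 + 2) := by
    intro k x hx τ hτ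
    have hx₀ := (half_pos ha).trans hx.1
    have hτ₀ := hs.trans_le hτ.1
    have hsq := pow_le_pow_left₀ (hsol.nonneg x τ hx₀ hτ₀) (hM x τ hx₀ hτ₀) 2
    have hk : 1 / ((k : ℝ) + 1) ≤ 1 := by
      rw [div_le_one (by positivity)]
      linarith [k.cast_nonneg (α := ℝ)]
    exact ⟨(sq_nonneg _).trans (hclose k x hx τ hτ).1, by linarith [(hclose k x hx τ hτ).2]⟩
  have hIcc : ∀ x ∈ Icc a (b + H), x ∈ Ioo (a / 2) (b + 1) := fun x hx =>
    ⟨by linarith [hx.1], by linarith [hx.2, hH.2]⟩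
  have hIcc' : ∀ x ∈ Icc a b, x ∈ Ioo (a / 2) (b + 1) := fun x hx =>
    ⟨by linarith [hx.1], by linarith [hx.2]⟩
  have henergy : ∀ τ ∈ Icc s t, Tendsto (fun k => ∫ x in Icc a b, φ x * u k x τ) atTop
      (𝓝 (∫ x in Icc a b, φ x * n x τ ^ 2)) := fun τ hτ =>
    tendsto_setIntegral_cutoff_mul hφ.continuous (fun k => by have := hu k; fun_prop)
      (fun k x hx => hbd k x (hIcc' x hx) τ hτ) fun x hx => hlim x (hIcc' x hx) τ hτ
  have hrate := tendsto_setIntegral_energyRate (L := L) hφ hH.1.le hu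
    (fun k x hx => hbd k x (hIcc x hx)) (fun x hx τ hτ => hsol.nonneg x τ
      ((half_pos ha).trans (hIcc x hx).1) (hs.trans_le hτ.1)) fun x hx => hlim x (hIcc x hx)
  refine le_of_tendsto_of_tendsto' ((henergy t (right_mem_Icc.2 hst)).sub
    (henergy s (left_mem_Icc.2 hst))) ?_ hle
  simpa using hrate.add (((hη.const_mul _).mul_const _).const_mul (t - s))

end

/-! ### Removal of the cutoff -/

section

variable {n : ℝ → ℝ → ℝ} {n₀ φ : ℝ → ℝ} {a b s t H : ℝ} {L : NNReal}

lemma IsKompSol.continuousOn_comp_add (hsol : IsKompSol n n₀) (hs : 0 < s) (hH : 0 ≤ H) :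
    ContinuousOn (fun p : ℝ × ℝ => n (p.2 + H) p.1) (Icc s t ×ˢ Ioi 0) :=
  hsol.contOn.comp (f := fun p : ℝ × ℝ => (p.2 + H, p.1)) (by fun_prop) fun _ hp =>
    ⟨add_pos_of_pos_of_nonneg hp.2 hH, hs.trans_le hp.1.1⟩

lemma IsKompSol.continuousOn (hsol : IsKompSol n n₀) (hs : 0 < s) :
    ContinuousOn (fun p : ℝ × ℝ => n p.2 p.1) (Icc s t ×ˢ Ioi 0) := by
  simpa using hsol.continuousOn_comp_add hs le_rfl

lemma integrableOn_halfStrip_of_continuousOn {F : ℝ × ℝ → ℝ}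
    (hF : ContinuousOn F (Icc s t ×ˢ Ioi 0)) (ha : 0 < a)
    (hzero : ∀ p : ℝ × ℝ, p.2 ∉ Icc a b → F p = 0) :
    IntegrableOn F (Icc s t ×ˢ Ioi 0) ∧
      ∫ p in Icc s t ×ˢ Ioi 0, F p = ∫ p in Icc s t ×ˢ Icc a b, F p := by
  have hsub : Icc s t ×ˢ Icc a b ⊆ Icc s t ×ˢ Ioi (0 : ℝ) :=
    prod_mono_right fun x hx => ha.trans_le hx.1
  have hzero' : ∀ p ∈ (Icc s t ×ˢ Ioi 0) \ Icc s t ×ˢ Icc a b, F p = 0 := fun p hp =>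
    hzero p fun h => hp.2 ⟨hp.1.1, h⟩
  have hmeas : MeasurableSet (Icc s t ×ˢ Ioi (0 : ℝ)) := measurableSet_Icc.prod measurableSet_Ioi
  exact ⟨((hF.mono hsub).integrableOn_compact
    (isCompact_Icc.prod isCompact_Icc)).of_forall_sdiff_eq_zero hmeas hzero',
    setIntegral_eq_of_subset_of_forall_sdiff_eq_zero hmeas hsub hzero'⟩

lemma IsKompSol.integrableOn_fluxWeight (hsol : IsKompSol n n₀) (ha : 0 < a) (hs : 0 < s)
    (hφ : IsCutoff φ a b) :
    IntegrableOn (fun p : ℝ × ℝ => fluxWeight φ p.2 (n p.2 p.1)) (Icc s t ×ˢ Ioi 0) :=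
  (integrableOn_halfStrip_of_continuousOn (b := b) (hφ.continuous_fluxWeight.comp_continuousOn
    (continuousOn_snd.prodMk (hsol.continuousOn hs))) ha fun _ hp =>
      hφ.fluxWeight_eq_zero (fun h => hp (Ioo_subset_Icc_self h)) _).1

lemma IsKompSol.cutoff_energy_add_le (hsol : IsKompSol n n₀) (ha : 0 < a) (hab : a ≤ b)
    (hs : 0 < s) (hst : s ≤ t) (hφ : IsCutoff φ a b) (hL : LipschitzWith L fun x => x ^ 2 * φ x)
    (hH : H ∈ Ioo 0 1) :
    IntegrableOn (fun p : ℝ × ℝ => coarseDissipation (fun x => x ^ 2 * φ x) L H (n · p.1) p.2)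
        (Icc s t ×ˢ Ioi 0) ∧
      (∫ x in Ioi 0, φ x * n x t ^ 2) +
        (∫ p in Icc s t ×ˢ Ioi 0, coarseDissipation (fun x => x ^ 2 * φ x) L H (n · p.1) p.2) ≤
      (∫ x in Ioi 0, φ x * n x s ^ 2) +
        ∫ p in Icc s t ×ˢ Ioi 0, fluxWeight φ p.2 (n p.2 p.1) := by
  have hφ₀ : ∀ x ∉ Icc a b, φ x = 0 := fun x hx => hφ.eq_zero fun h => hx (Ioo_subset_Icc_self h)
  have hcont := (hφ.continuous_energyRate (L := L) (H := H)).comp_continuousOn'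
    (continuousOn_snd.prodMk ((hsol.continuousOn (t := t) hs).prodMk
      (hsol.continuousOn_comp_add (t := t) hs hH.1.le)))
  obtain ⟨hrate, hrate_eq⟩ := integrableOn_halfStrip_of_continuousOn (b := b) hcont ha fun p hp =>
    hφ.energyRate_eq_zero (mul_nonneg L.coe_nonneg hH.1.le)
      (fun h => hp (Ioo_subset_Icc_self h)) _ _
  have hflux := hsol.integrableOn_fluxWeight (t := t) ha hs hφ
  have hcoarse : (fun p : ℝ × ℝ => coarseDissipation (fun x => x ^ 2 * φ x) L H (n · p.1) p.2) =
      fun p => fluxWeight φ p.2 (n p.2 p.1) - energyRate φ L H p.2 (n p.2 p.1) (n (p.2 + H) p.1) :=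
    funext fun p => (sub_sub_cancel _ _).symm
  have hslice : ∀ τ, ∫ x in Ioi 0, φ x * n x τ ^ 2 = ∫ x in Icc a b, φ x * n x τ ^ 2 := fun τ =>
    setIntegral_eq_of_subset_of_forall_sdiff_eq_zero measurableSet_Ioi
      (fun x hx => ha.trans_le hx.1) fun x hx => by rw [hφ₀ x hx.2, zero_mul]
  have hle := hsol.cutoff_energy_sub_le ha hab hs hst hφ hL hH
  rw [hcoarse, integral_sub hflux hrate, hrate_eq, hslice, hslice]
  exact ⟨hflux.sub hrate, by linarith⟩

end

lemma integrable_and_integral_le_of_eventually_integral_le {α : Type*} [MeasurableSpace α]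
    {μ : Measure α} {f : ℕ → α → ℝ} {g : α → ℝ} {Q : ℝ} (hf : ∀ k, Integrable (f k) μ)
    (hf₀ : ∀ k x, 0 ≤ f k x) (hlim : ∀ᵐ x ∂μ, Tendsto (fun k => f k x) atTop (𝓝 (g x)))
    (hle : ∀ ε > 0, ∀ᶠ k in atTop, ∫ x, f k x ∂μ ≤ Q + ε) :
    Integrable g μ ∧ ∫ x, g x ∂μ ≤ Q := by
  have hg : AEStronglyMeasurable g μ :=
    aestronglyMeasurable_of_tendsto_ae atTop (fun k => (hf k).1) hlim
  have hg₀ : 0 ≤ᵐ[μ] g := by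
    filter_upwards [hlim] with x hx using ge_of_tendsto' hx fun k => hf₀ k x
  have hlint : ∀ ε > 0, ∫⁻ x, ENNReal.ofReal (g x) ∂μ ≤ ENNReal.ofReal (Q + ε) := fun ε hε =>
    calc ∫⁻ x, ENNReal.ofReal (g x) ∂μ
        = ∫⁻ x, liminf (fun k => ENNReal.ofReal (f k x)) atTop ∂μ := by
          refine lintegral_congr_ae ?_
          filter_upwards [hlim] with x hx
          exact ((ENNReal.continuous_ofReal.tendsto _).comp hx).liminf_eq.symm
      _ ≤ liminf (fun k => ∫⁻ x, ENNReal.ofReal (f k x) ∂μ) atTop :=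
          lintegral_liminf_le' fun k => (hf k).1.aemeasurable.ennreal_ofReal
      _ ≤ ENNReal.ofReal (Q + ε) := by
          refine liminf_le_of_frequently_le' ((hle ε hε).frequently.mono fun k hk => ?_)
          rw [← ofReal_integral_eq_lintegral_ofReal (hf k) (ae_of_all _ (hf₀ k))]
          exact ENNReal.ofReal_le_ofReal hk
  have hint : Integrable g μ := (lintegral_ofReal_ne_top_iff_integrable hg hg₀).1
    ((hlint 1 one_pos).trans_lt ENNReal.ofReal_lt_top).ne
  refine ⟨hint, le_of_forall_pos_le_add fun ε hε => ?_⟩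
  obtain ⟨k, hk⟩ := (hle ε hε).exists
  have hQ : 0 ≤ Q + ε := (integral_nonneg (hf₀ k)).trans hk
  rw [integral_eq_lintegral_of_nonneg_ae hg₀ hg]
  exact ENNReal.toReal_le_of_le_ofReal hQ (hlint ε hε)

lemma hasCompactSupport_deriv_smoothTransition : HasCompactSupport (deriv smoothTransition) := by
  refine .intro (K := Icc 0 1) isCompact_Icc fun y hy => ?_
  rcases not_and_or.1 hy with h | h
  · have : smoothTransition =ᶠ[𝓝 y] fun _ => 0 := by
      filter_upwards [gt_mem_nhds (not_le.1 h)] with z hz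
        using smoothTransition.zero_of_nonpos hz.le
    rw [this.deriv_eq, deriv_const]
  · have : smoothTransition =ᶠ[𝓝 y] fun _ => 1 := by
      filter_upwards [lt_mem_nhds (not_le.1 h)] with z hz using smoothTransition.one_of_one_le hz.le
    rw [this.deriv_eq, deriv_const]

lemma deriv_comp_add_mul (f : ℝ → ℝ) (p q : ℝ) :
    deriv (fun x => f (p + q * x)) = fun x => q * deriv f (p + q * x) :=
  funext fun x => (deriv_comp_mul_left q (fun z => f (p + z)) x).trans <| by
    rw [deriv_comp_const_add, smul_eq_mul]

lemma exists_bound_deriv_smoothTransition_comp (p : ℝ) :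
    ∃ C, ∀ q x, |deriv (fun x => smoothTransition (p + q * x)) x| ≤ C * |q| ∧
      |x * deriv (fun x => smoothTransition (p + q * x)) x| ≤ C ∧
      |x ^ 2 * deriv (deriv fun x => smoothTransition (p + q * x)) x| ≤ C := by
  have hd : ContDiff ℝ 1 (deriv smoothTransition) := smoothTransition.contDiff.deriv' (n := 1)
  have hcd := hd.continuous
  have hs := hasCompactSupport_deriv_smoothTransition
  obtain ⟨C₀, hC₀⟩ := hs.exists_bound_of_continuous hcd
  obtain ⟨C₁, hC₁⟩ := (hs.mul_left (f := fun y => y - p)).exists_bound_of_continuous (by fun_prop)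
  obtain ⟨C₂, hC₂⟩ := (hs.deriv.mul_left (f := fun y => (y - p) ^ 2)).exists_bound_of_continuous
    (by have := hd.continuous_deriv le_rfl; fun_prop)
  refine ⟨max C₀ (max C₁ C₂), fun q x => ?_⟩
  rw [deriv_comp_add_mul, deriv_const_mul_field', deriv_comp_add_mul]
  refine ⟨?_, ?_, ?_⟩
  · rw [abs_mul, mul_comm]
    exact mul_le_mul_of_nonneg_right ((hC₀ _).trans (le_max_left _ _)) (abs_nonneg q)
  · have := hC₁ (p + q * x)
    simp only [Pi.mul_apply, add_sub_cancel_left, norm_eq_abs] at this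
    rw [← mul_assoc, mul_comm x]
    exact this.trans ((le_max_left _ _).trans (le_max_right _ _))
  · have := hC₂ (p + q * x)
    simp only [Pi.mul_apply, add_sub_cancel_left, norm_eq_abs] at this
    calc _ = |(q * x) ^ 2 * deriv (deriv smoothTransition) (p + q * x)| := by ring_nf
      _ ≤ _ := this.trans ((le_max_right _ _).trans (le_max_right _ _))

/-- A smooth cutoff of `(0, ∞)` that equals `1` on `[2/κ, κ]` and vanishes outside `[1/κ, 2κ]`. Its
derivatives are controlled in the scale-invariant sense of `x ∂ₓ`, uniformly in `κ`. -/
noncomputable def dilationCutoff (κ x : ℝ) : ℝ :=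
  smoothTransition (-1 + κ * x) * smoothTransition (2 + -κ⁻¹ * x)

lemma dilationCutoff_mem_Icc (κ x : ℝ) : dilationCutoff κ x ∈ Icc 0 1 :=
  ⟨mul_nonneg (smoothTransition.nonneg _) (smoothTransition.nonneg _),
    mul_le_one₀ (smoothTransition.le_one _) (smoothTransition.nonneg _) (smoothTransition.le_one _)⟩

lemma isCutoff_dilationCutoff {κ : ℝ} (hκ : 1 ≤ κ) :
    IsCutoff (dilationCutoff κ) (1 / (2 * κ)) (3 * κ) where
  contDiff := by
    refine ContDiff.mul (smoothTransition.contDiff.comp ?_) (smoothTransition.contDiff.comp ?_) <;>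
      fun_prop
  nonneg x := (dilationCutoff_mem_Icc κ x).1
  tsupport_subset := by
    have hκ₀ : 0 < κ := one_pos.trans_le hκ
    have hsub : Icc (1 / κ) (2 * κ) ⊆ Ioo (1 / (2 * κ)) (3 * κ) :=
      Icc_subset_Ioo (one_div_lt_one_div_of_lt hκ₀ (by linarith)) (by linarith)
    refine (closure_minimal (fun x hx => ?_) isClosed_Icc).trans hsub
    obtain ⟨h₁, h₂⟩ := mul_ne_zero_iff.1 hx
    have h₁ : 0 < -1 + κ * x := not_le.1 fun h => h₁ (smoothTransition.zero_of_nonpos h)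
    have h₂ : 0 < 2 + -κ⁻¹ * x := not_le.1 fun h => h₂ (smoothTransition.zero_of_nonpos h)
    rw [neg_mul, inv_mul_eq_div] at h₂
    exact ⟨(div_le_iff₀' hκ₀).2 (by linarith), (div_le_iff₀ hκ₀).1 (by linarith)⟩

lemma eventually_dilationCutoff_eventuallyEq_one {x : ℝ} (hx : 0 < x) :
    ∀ᶠ κ in atTop, dilationCutoff κ =ᶠ[𝓝 x] fun _ => 1 := by
  filter_upwards [eventually_gt_atTop (2 / x), eventually_gt_atTop x] with κ h2 hxκ
  have hκ := hx.trans hxκ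
  filter_upwards [lt_mem_nhds ((div_lt_comm₀ hx hκ).1 h2), gt_mem_nhds hxκ] with y hy hyκ
  have h₁ : 2 < κ * y := (div_lt_iff₀' hκ).1 hy
  have h₂ : κ⁻¹ * y < 1 := by rw [inv_mul_eq_div]; exact (div_lt_one hκ).2 hyκ
  rw [dilationCutoff, smoothTransition.one_of_one_le (by linarith),
    smoothTransition.one_of_one_le (by linarith), one_mul]

lemma abs_mul_deriv_mul_le_and_abs_sq_mul_deriv_deriv_mul_le {u v : ℝ → ℝ} {x A B : ℝ}
    (hu : ContDiff ℝ 2 u) (hv : ContDiff ℝ 2 v) (hu₀ : |u x| ≤ 1) (hv₀ : |v x| ≤ 1)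
    (hu₁ : |x * deriv u x| ≤ A) (hv₁ : |x * deriv v x| ≤ B)
    (hu₂ : |x ^ 2 * deriv (deriv u) x| ≤ A) (hv₂ : |x ^ 2 * deriv (deriv v) x| ≤ B) :
    |x * deriv (fun y => u y * v y) x| ≤ A + B ∧
      |x ^ 2 * deriv (deriv fun y => u y * v y) x| ≤ A + 2 * (A * B) + B := by
  have hmul {z w C : ℝ} (hz : |z| ≤ C) (hw : |w| ≤ 1) : |z * w| ≤ C := by
    rw [abs_mul]
    exact (mul_le_of_le_one_right (abs_nonneg z) hw).trans hz
  constructor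
  · calc |x * deriv (fun y => u y * v y) x|
        = |x * deriv u x * v x + x * deriv v x * u x| := by
          rw [deriv_fun_mul (hu.differentiable two_ne_zero x) (hv.differentiable two_ne_zero x)]
          ring_nf
      _ ≤ A + B := (abs_add_le _ _).trans (add_le_add (hmul hu₁ hv₀) (hmul hv₁ hu₀))
  · calc |x ^ 2 * deriv (deriv fun y => u y * v y) x|
        = |x ^ 2 * deriv (deriv u) x * v x + 2 * (x * deriv u x * (x * deriv v x))
            + x ^ 2 * deriv (deriv v) x * u x| := by rw [deriv_deriv_mul hu hv]; ring_nf
      _ ≤ A + 2 * (A * B) + B := by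
        refine (abs_add_three _ _ _).trans ?_
        rw [abs_mul 2, abs_two, abs_mul (x * deriv u x)]
        have := (abs_nonneg _).trans hu₁
        gcongr
        exacts [hmul hu₂ hv₀, hmul hv₂ hu₀]

lemma exists_bound_deriv_dilationCutoff :
    ∃ C, ∀ κ ≥ 1, ∀ x, -deriv (dilationCutoff κ) x ≤ C ∧ |x * deriv (dilationCutoff κ) x| ≤ C ∧
      |x ^ 2 * deriv (deriv (dilationCutoff κ)) x| ≤ C := by
  obtain ⟨A, hA⟩ := exists_bound_deriv_smoothTransition_comp (-1)
  obtain ⟨B, hB⟩ := exists_bound_deriv_smoothTransition_comp 2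
  refine ⟨A + 2 * (A * B) + B, fun κ hκ x => ?_⟩
  set u : ℝ → ℝ := fun x => smoothTransition (-1 + κ * x)
  set v : ℝ → ℝ := fun x => smoothTransition (2 + -κ⁻¹ * x)
  have hu : ContDiff ℝ 2 u := smoothTransition.contDiff.comp (by fun_prop)
  have hv : ContDiff ℝ 2 v := smoothTransition.contDiff.comp (by fun_prop)
  have hu₀₁ : u x ∈ Icc 0 1 := ⟨smoothTransition.nonneg _, smoothTransition.le_one _⟩
  have hv₀₁ : v x ∈ Icc 0 1 := ⟨smoothTransition.nonneg _, smoothTransition.le_one _⟩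
  have hu' : 0 ≤ deriv u x := (smoothTransition.monotone.comp fun y z hyz => by
    gcongr : Monotone u).deriv_nonneg
  obtain ⟨-, hu₁, hu₂⟩ := hA κ x
  obtain ⟨hv₀, hv₁, hv₂⟩ := hB (-κ⁻¹) x
  have hA₀ := (abs_nonneg _).trans hu₁
  have hB₀ := (abs_nonneg _).trans hv₁
  have hAB := mul_nonneg hA₀ hB₀
  obtain ⟨h₁, h₂⟩ := abs_mul_deriv_mul_le_and_abs_sq_mul_deriv_deriv_mul_le hu hv
    (abs_le.2 ⟨by linarith [hu₀₁.1], hu₀₁.2⟩) (abs_le.2 ⟨by linarith [hv₀₁.1], hv₀₁.2⟩)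
    hu₁ hv₁ hu₂ hv₂
  refine ⟨?_, h₁.trans (by linarith), h₂⟩
  have hdv : |deriv v x| ≤ B := by
    refine hv₀.trans (mul_le_of_le_one_right hB₀ ?_)
    rw [abs_neg, abs_of_nonneg (by positivity)]
    exact inv_le_one_of_one_le₀ hκ
  calc -deriv (dilationCutoff κ) x = -(deriv u x * v x + u x * deriv v x) := congrArg Neg.neg <|
        deriv_fun_mul (hu.differentiable two_ne_zero x) (hv.differentiable two_ne_zero x)
    _ ≤ u x * -deriv v x := by linarith [mul_nonneg hu' hv₀₁.1]
    _ ≤ u x * B := mul_le_mul_of_nonneg_left ((neg_le_abs _).trans hdv) hu₀₁.1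
    _ ≤ B := mul_le_of_le_one_left hB₀ hu₀₁.2
    _ ≤ _ := by linarith

lemma exists_fluxWeight_dilationCutoff_le :
    ∃ C ≥ 0, ∀ κ ≥ 1, ∀ x > 0, ∀ y ≥ 0,
      fluxWeight (dilationCutoff κ) x y ≤ C * ((1 + x) * (y ^ 2 + y ^ 3)) := by
  obtain ⟨C, hC⟩ := exists_bound_deriv_dilationCutoff
  have hC₀ : 0 ≤ C := (abs_nonneg _).trans (hC 1 le_rfl 0).2.1
  refine ⟨6 * C + 2, by positivity, fun κ hκ x hx y hy => ?_⟩
  obtain ⟨h₀, h₁, h₂⟩ := hC κ hκ x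
  set φ := dilationCutoff κ
  have hφ : φ x ∈ Icc 0 1 := dilationCutoff_mem_Icc κ x
  have hquad : x ^ 2 * deriv (deriv φ) x + (4 * x - x ^ 2) * deriv φ x + (2 * x - 2) * φ x ≤
      (6 * C + 2) * (1 + x) := by
    have hdrift : (4 - x) * (x * deriv φ x) ≤ (4 + x) * C := by
      nlinarith [abs_le.1 h₁]
    nlinarith [(abs_le.1 h₂).2, mul_nonneg hx.le hC₀, mul_nonneg hx.le (sub_nonneg.2 hφ.2), hφ.1]
  have hcubic : 4 / 3 * -deriv φ x ≤ (6 * C + 2) * (1 + x) := by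
    nlinarith [mul_nonneg hx.le hC₀]
  calc fluxWeight φ x y
      = (x ^ 2 * deriv (deriv φ) x + (4 * x - x ^ 2) * deriv φ x + (2 * x - 2) * φ x) * y ^ 2
          + 4 / 3 * -deriv φ x * y ^ 3 := by rw [fluxWeight]; ring
    _ ≤ (6 * C + 2) * (1 + x) * y ^ 2 + (6 * C + 2) * (1 + x) * y ^ 3 := by gcongr
    _ = _ := by ring

lemma fluxWeight_of_eventuallyEq_one {φ : ℝ → ℝ} {x : ℝ} (hφ : φ =ᶠ[𝓝 x] fun _ => 1) (y : ℝ) :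
    fluxWeight φ x y = (2 * x - 2) * y ^ 2 := by
  simp [fluxWeight, hφ.eq_of_nhds, hφ.deriv_eq, hφ.deriv.deriv_eq]

lemma tendsto_setIntegral_dilationCutoff_mul {f : ℝ → ℝ} (hf : IntegrableOn f (Ioi 0)) :
    Tendsto (fun κ => ∫ x in Ioi 0, dilationCutoff κ x * f x) atTop (𝓝 (∫ x in Ioi 0, f x)) := by
  refine tendsto_integral_filter_of_dominated_convergence (fun x => |f x|) ?_ ?_ hf.abs ?_
  · filter_upwards [eventually_ge_atTop 1] with κ hκ
    exact (isCutoff_dilationCutoff hκ).continuous.aestronglyMeasurable.mul hf.1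
  · refine .of_forall fun κ => ae_of_all _ fun x => ?_
    rw [norm_mul, norm_of_nonneg (dilationCutoff_mem_Icc κ x).1]
    exact mul_le_of_le_one_left (norm_nonneg _) (dilationCutoff_mem_Icc κ x).2
  · filter_upwards [ae_restrict_mem measurableSet_Ioi] with x hx
    refine tendsto_nhds_of_eventually_eq ?_
    filter_upwards [eventually_dilationCutoff_eventuallyEq_one hx] with κ hκ
    rw [hκ.eq_of_nhds, one_mul]

section

variable {n : ℝ → ℝ → ℝ} {n₀ : ℝ → ℝ} {s t : ℝ}

lemma IsKompSol.exists_one_add_sq_mul_le (hsol : IsKompSol n n₀) (ht : 0 < t) :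
    ∃ B, ∀ x τ, 0 < x → 0 < τ → τ ≤ t → (1 + x ^ 2) * n x τ ≤ B := by
  obtain ⟨M, hM⟩ := hsol.bounded
  obtain ⟨R, hR₀, hR⟩ := hsol.decay (t + 1) (by linarith) 1 one_pos
  refine ⟨M + (1 + R ^ 2 * M), fun x τ hx hτ hτt => ?_⟩
  have hnx := hsol.nonneg x τ hx hτ
  have hnM := hM x τ hx hτ
  have hM₀ := hnx.trans hnM
  have htail : x ^ 2 * n x τ ≤ 1 + R ^ 2 * M := by
    rcases le_total R x with h | h
    · linarith [hR x h τ hτ.le (by linarith), mul_nonneg (sq_nonneg R) hM₀]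
    · have : x ^ 2 * n x τ ≤ R ^ 2 * M := by gcongr
      linarith
  linarith

lemma IsKompSol.integrableOn_sq (hsol : IsKompSol n n₀) (ht : 0 < t) :
    IntegrableOn (fun x => n x t ^ 2) (Ioi 0) := by
  obtain ⟨B, hB⟩ := hsol.exists_one_add_sq_mul_le ht
  have hc : ContinuousOn (fun x => n x t ^ 2) (Ioi 0) := fun x hx =>
    ((hsol.diff_x t ht x hx).continuousAt.pow 2).continuousWithinAt
  refine (integrable_inv_one_add_sq.const_mul (B ^ 2)).integrableOn.mono'
    (hc.aestronglyMeasurable measurableSet_Ioi) ?_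
  filter_upwards [ae_restrict_mem measurableSet_Ioi] with x hx
  have hnx := hsol.nonneg x t hx ht
  rw [norm_of_nonneg (sq_nonneg _), ← div_eq_mul_inv, le_div_iff₀ (by positivity)]
  calc n x t ^ 2 * (1 + x ^ 2) ≤ n x t ^ 2 * (1 + x ^ 2) ^ 2 :=
        mul_le_mul_of_nonneg_left (le_self_pow₀ (by nlinarith) two_ne_zero) (sq_nonneg _)
    _ = ((1 + x ^ 2) * n x t) ^ 2 := by ring
    _ ≤ B ^ 2 := pow_le_pow_left₀ (by positivity) (hB x t hx ht le_rfl) 2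

lemma IsKompSol.integrableOn_mul_sq (hsol : IsKompSol n n₀) (hs : 0 < s) (hst : s ≤ t) {c : ℝ → ℝ}
    {C : ℝ} (hc : Continuous c) (hcC : ∀ x > 0, |c x| ≤ C * (1 + x)) :
    IntegrableOn (fun p : ℝ × ℝ => c p.2 * n p.2 p.1 ^ 2) (Icc s t ×ˢ Ioi 0) := by
  obtain ⟨B, hB⟩ := hsol.exists_one_add_sq_mul_le (hs.trans_le hst)
  have hdom : IntegrableOn (fun p : ℝ × ℝ => 2 * C * B ^ 2 * (1 + p.2 ^ 2)⁻¹)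
      (Icc s t ×ˢ Ioi 0) := by
    rw [IntegrableOn, Measure.volume_eq_prod, ← Measure.prod_restrict]
    exact (integrable_inv_one_add_sq.const_mul (2 * C * B ^ 2)).integrableOn.comp_snd _
  have hcont := (hc.comp continuous_snd).continuousOn.mul ((hsol.continuousOn (t := t) hs).pow 2)
  have hmeas : MeasurableSet (Icc s t ×ˢ Ioi (0 : ℝ)) := measurableSet_Icc.prod measurableSet_Ioi
  refine hdom.mono' (hcont.aestronglyMeasurable hmeas) ?_
  filter_upwards [ae_restrict_mem hmeas] with ⟨τ, x⟩ ⟨hτ, hx⟩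
  have hx₀ : 0 < x := hx
  have hτ₀ := hs.trans_le hτ.1
  have hnx := hsol.nonneg x τ hx₀ hτ₀
  have hC : 0 ≤ C := nonneg_of_mul_nonneg_left ((abs_nonneg _).trans (hcC x hx₀)) (by positivity)
  rw [norm_mul, norm_of_nonneg (sq_nonneg _), ← div_eq_mul_inv, le_div_iff₀ (by positivity)]
  calc |c x| * n x τ ^ 2 * (1 + x ^ 2)
      ≤ C * (2 * (1 + x ^ 2)) * n x τ ^ 2 * (1 + x ^ 2) := by
        gcongr
        exact (hcC x hx₀).trans (mul_le_mul_of_nonneg_left (by nlinarith [sq_nonneg (x - 1)]) hC)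
    _ = 2 * C * ((1 + x ^ 2) * n x τ) ^ 2 := by ring
    _ ≤ 2 * C * B ^ 2 := by
        gcongr
        exact hB x τ hx₀ hτ₀ hτ.2

lemma IsKompSol.eventually_integral_fluxWeight_le (hsol : IsKompSol n n₀) (hs : 0 < s)
    (hst : s ≤ t) {ε : ℝ} (hε : 0 < ε) :
    ∀ᶠ κ in atTop, ∫ p in Icc s t ×ˢ Ioi 0, fluxWeight (dilationCutoff κ) p.2 (n p.2 p.1) ≤
      (∫ p in Icc s t ×ˢ Ioi 0, (2 * p.2 - 2) * n p.2 p.1 ^ 2) + ε := by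
  obtain ⟨M, hM⟩ := hsol.bounded
  obtain ⟨C, hC₀, hC⟩ := exists_fluxWeight_dilationCutoff_le
  have hae := ae_restrict_mem (μ := volume) (measurableSet_Icc.prod measurableSet_Ioi :
    MeasurableSet (Icc s t ×ˢ Ioi (0 : ℝ)))
  refine eventually_integral_le_add_of_eventually_le (l := atTop)
    (F := fun κ p => fluxWeight (dilationCutoff κ) p.2 (n p.2 p.1))
    (B := fun p => C * (1 + M) * ((1 + p.2) * n p.2 p.1 ^ 2))
    (hsol.integrableOn_mul_sq (C := 2) hs hst (c := fun x => 2 * x - 2) (by fun_prop)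
      fun x hx => abs_le.2 ⟨by linarith, by linarith⟩)
    ((hsol.integrableOn_mul_sq (C := 1) hs hst (c := fun x => 1 + x) (by fun_prop)
      fun x hx => by rw [one_mul, abs_of_pos (by linarith)]).const_mul _) ?_ ?_ ?_ hε
  · filter_upwards [eventually_ge_atTop 1] with κ hκ
    exact hsol.integrableOn_fluxWeight (by positivity) hs (isCutoff_dilationCutoff hκ)
  · filter_upwards [eventually_ge_atTop 1] with κ hκ
    filter_upwards [hae] with ⟨τ, x⟩ ⟨hτ, hx⟩
    have hτ₀ := hs.trans_le hτ.1
    have hnx := hsol.nonneg x τ hx hτ₀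
    have hcube : n x τ ^ 3 ≤ M * n x τ ^ 2 := by
      rw [pow_succ']
      exact mul_le_mul_of_nonneg_right (hM x τ hx hτ₀) (sq_nonneg _)
    have hx₀ : 0 < x := hx
    calc fluxWeight (dilationCutoff κ) x (n x τ)
        ≤ C * ((1 + x) * (n x τ ^ 2 + n x τ ^ 3)) := hC κ hκ x hx _ hnx
      _ ≤ C * ((1 + x) * (n x τ ^ 2 + M * n x τ ^ 2)) := by gcongr
      _ = C * (1 + M) * ((1 + x) * n x τ ^ 2) := by ring
  · filter_upwards [hae] with ⟨τ, x⟩ ⟨_, hx⟩ δ hδ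
    filter_upwards [eventually_dilationCutoff_eventuallyEq_one hx] with κ hκ
    rw [fluxWeight_of_eventuallyEq_one hκ]
    exact le_add_of_nonneg_right hδ.le

lemma IsKompSol.tendsto_coarseDissipation (hsol : IsKompSol n n₀) {φ : ℕ → ℝ → ℝ} {x τ : ℝ}
    (hx : 0 < x) (hτ : 0 < τ) {L H : ℕ → ℝ} (hφ : Tendsto (φ · x) atTop (𝓝 1))
    (hH : Tendsto H atTop (𝓝[>] 0)) (hLH : Tendsto (fun k => L k * H k) atTop (𝓝 0)) :
    Tendsto (fun k => coarseDissipation (fun x => x ^ 2 * φ k x) (L k) (H k) (n · τ) x) atTop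
      (𝓝 (x ^ 2 * deriv (n · τ) x ^ 2)) := by
  have hslope := (hsol.diff_x τ hτ x hx).hasDerivAt.tendsto_slope_zero_right.comp hH
  have hweight := (tendsto_const_nhds (x := (0 : ℝ))).max ((hφ.const_mul (x ^ 2)).sub hLH)
  rw [mul_one, sub_zero, max_eq_right (sq_nonneg x)] at hweight
  refine (hweight.mul (hslope.pow 2)).congr fun k => ?_
  simp [coarseDissipation, div_eq_inv_mul]

lemma IsKompSol.exists_dilationCutoff_energy_le (hsol : IsKompSol n n₀) (hs : 0 < s) (hst : s ≤ t)
    {κ : ℝ} (hκ : 1 ≤ κ) :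
    ∃ L H : ℝ, 0 < H ∧ H ≤ 1 / κ ∧ 0 ≤ L * H ∧ L * H ≤ 1 / κ ∧
      let D := fun p : ℝ × ℝ =>
        coarseDissipation (fun x => x ^ 2 * dilationCutoff κ x) L H (n · p.1) p.2
      IntegrableOn D (Icc s t ×ˢ Ioi 0) ∧
        (∫ x in Ioi 0, dilationCutoff κ x * n x t ^ 2) + ∫ p in Icc s t ×ˢ Ioi 0, D p ≤
          (∫ x in Ioi 0, dilationCutoff κ x * n x s ^ 2) +
            ∫ p in Icc s t ×ˢ Ioi 0, fluxWeight (dilationCutoff κ) p.2 (n p.2 p.1) := by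
  have hcut := isCutoff_dilationCutoff hκ
  have hκ₀ := one_pos.trans_le hκ
  obtain ⟨L, hL⟩ := hcut.sq_mul.contDiff.lipschitzWith_of_hasCompactSupport
    hcut.sq_mul.hasCompactSupport two_ne_zero
  have : 0 ≤ (L : ℝ) := L.coe_nonneg
  have hκL : κ ≤ (L + 1) * κ := le_mul_of_one_le_left hκ₀.le (by linarith)
  have hlt : 1 / (2 * κ) < 3 * κ := (div_lt_iff₀ (by positivity)).2 (by nlinarith)
  refine ⟨L, 1 / ((L + 2) * κ), by positivity, one_div_le_one_div_of_le hκ₀ (by nlinarith),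
    by positivity, ?_, hsol.cutoff_energy_add_le (by positivity) hlt.le hs hst hcut hL
      ⟨by positivity, (div_lt_one (by positivity)).2 (by nlinarith)⟩⟩
  rw [mul_one_div, div_le_div_iff₀ (by positivity) hκ₀]
  nlinarith

lemma IsKompSol.integrableOn_dissipation_and_energy_le (hsol : IsKompSol n n₀) (hs : 0 < s)
    (hst : s ≤ t) :
    IntegrableOn (fun p : ℝ × ℝ => p.2 ^ 2 * deriv (n · p.1) p.2 ^ 2) (Icc s t ×ˢ Ioi 0) ∧
      ∫ p in Icc s t ×ˢ Ioi 0, p.2 ^ 2 * deriv (n · p.1) p.2 ^ 2 ≤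
        (∫ x in Ioi 0, n x s ^ 2) - (∫ x in Ioi 0, n x t ^ 2) +
          ∫ p in Icc s t ×ˢ Ioi 0, (2 * p.2 - 2) * n p.2 p.1 ^ 2 := by
  have hκ : ∀ k : ℕ, (1 : ℝ) ≤ k + 1 := fun k => le_add_of_nonneg_left k.cast_nonneg
  have hκ_top : Tendsto (fun k : ℕ => (k : ℝ) + 1) atTop atTop :=
    tendsto_atTop_add_const_right _ _ tendsto_natCast_atTop_atTop
  choose L H hH₀ hH hLH₀ hLH hint hle using
    fun k : ℕ => hsol.exists_dilationCutoff_energy_le hs hst (hκ k)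
  refine integrable_and_integral_le_of_eventually_integral_le hint
    (fun k p => coarseDissipation_nonneg _ _ _ _ _) ?_ fun ε hε => ?_
  · filter_upwards [ae_restrict_mem (measurableSet_Icc.prod measurableSet_Ioi)] with ⟨τ, x⟩ ⟨hτ, hx⟩
    refine hsol.tendsto_coarseDissipation (φ := fun k => dilationCutoff (k + 1)) hx
      (hs.trans_le hτ.1) ?_ ?_ ?_
    · refine tendsto_nhds_of_eventually_eq ?_
      exact (hκ_top.eventually (eventually_dilationCutoff_eventuallyEq_one hx)).mono
        fun k hk => hk.eq_of_nhds
    · refine tendsto_nhdsWithin_iff.2 ⟨?_, .of_forall hH₀⟩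
      exact squeeze_zero (fun k => (hH₀ k).le) hH tendsto_one_div_add_atTop_nhds_zero_nat
    · exact squeeze_zero hLH₀ hLH tendsto_one_div_add_atTop_nhds_zero_nat
  · have hlim := fun {τ} (hτ : 0 < τ) =>
      (tendsto_setIntegral_dilationCutoff_mul (hsol.integrableOn_sq hτ)).comp hκ_top
    have hε₃ : 0 < ε / 3 := by positivity
    filter_upwards [hκ_top.eventually (hsol.eventually_integral_fluxWeight_le hs hst hε₃),
      (hlim hs).eventually_le_const (lt_add_of_pos_right _ hε₃),
      (hlim (hs.trans_le hst)).eventually_const_le (sub_lt_self _ hε₃)] with k hflux hks hkt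
    have hk := hle k
    simp only [Function.comp_apply] at hks hkt
    linarith

end

theorem l2_energy_estimate
    (n : ℝ → ℝ → ℝ) (n₀ : ℝ → ℝ)
    (hsol : IsKompSol n n₀)
    (h0nonneg : ∀ x : ℝ, 0 < x → 0 ≤ n₀ x)
    (h0bdd : ∃ C : ℝ, ∀ x : ℝ, 0 < x → n₀ x ≤ C)
    (h0decay : Filter.Tendsto (fun x => x ^ 2 * n₀ x) Filter.atTop (nhds 0))
    :
    ∀ s t : ℝ, 0 < s → s < t →
      (∫ x in Set.Ioi (0:ℝ), n x t ^ 2) +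
        (∫ τ in s..t, ∫ x in Set.Ioi (0:ℝ),
          (n x τ ^ 2 + x ^ 2 * deriv (fun y => n y τ) x ^ 2)) ≤
      (∫ x in Set.Ioi (0:ℝ), n x s ^ 2) +
        2 * ∫ τ in s..t, ∫ x in Set.Ioi (0:ℝ), x * n x τ ^ 2 := by
  intro s t hs hst
  have hsq : IntegrableOn (fun p : ℝ × ℝ => n p.2 p.1 ^ 2) (Icc s t ×ˢ Ioi 0) := by
    simpa using hsol.integrableOn_mul_sq (C := 1) hs hst.le (c := fun _ => 1) continuous_const
      fun x hx => by rw [abs_one]; linarith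
  have hmul : IntegrableOn (fun p : ℝ × ℝ => p.2 * n p.2 p.1 ^ 2) (Icc s t ×ˢ Ioi 0) :=
    hsol.integrableOn_mul_sq (C := 1) hs hst.le continuous_id fun x hx => by
      rw [id, abs_of_pos hx]; linarith
  obtain ⟨hdiss, henergy⟩ := hsol.integrableOn_dissipation_and_energy_le hs hst.le
  have hweight : ∫ p in Icc s t ×ˢ Ioi 0, (2 * p.2 - 2) * n p.2 p.1 ^ 2 =
      2 * (∫ p in Icc s t ×ˢ Ioi 0, p.2 * n p.2 p.1 ^ 2) -
        2 * ∫ p in Icc s t ×ˢ Ioi 0, n p.2 p.1 ^ 2 := by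
    rw [← integral_const_mul, ← integral_const_mul,
      ← integral_sub (hmul.const_mul 2) (hsq.const_mul 2)]
    exact integral_congr_ae (.of_forall fun p => by ring)
  have hsq₀ : 0 ≤ ∫ p in Icc s t ×ˢ Ioi 0, n p.2 p.1 ^ 2 := integral_nonneg fun p => sq_nonneg _
  rw [intervalIntegral_setIntegral_eq_setIntegral_prod
      (f := fun τ x => n x τ ^ 2 + x ^ 2 * deriv (n · τ) x ^ 2) hst.le (hsq.add hdiss),
    intervalIntegral_setIntegral_eq_setIntegral_prod (f := fun τ x => x * n x τ ^ 2) hst.le hmul,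
    integral_add hsq hdiss]
  linarith
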